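/- For an almost quaternion-Hermitian 4n-manifold with n > 1, the six Sp(n)Sp(1)-components of the intrinsic torsion ξ are computed from the three-forms β_A as follows: (i) ψ^{(3)} = (1/12)(β_I^{(3)} + β_J^{(3)} + β_K^{(3)}); (ii) ψ^{(3)}_A = −(1/8) β_A^{(3)} + (1/48)(3 + 𝓛_A) Σ_{B=I,J,K} β_B^{(3)}; (iii) ψ^{(K)} = −(1/48)(β_I^{(K)} + β_J^{(K)} + β_K^{(K)}); (iv) ψ^{(K)}_A = −(1/2) β_A^{(K)} + (1/6) Σ_{B=I,J,K} β_B^{(K)}; (v) θ^ξ = (n/(24(2n−1))) Σ_{A=I,J,K} (ν^A_3 − 2Aλ_A); (vi) θ^ξ_A = (n/(4(n+1))) ( (ν^A_3 − 2Aλ_A) − ((n−1)/(2(2n−1))) Σ_{B=I,J,K} (ν^B_3 − 2Bλ_B) ). -/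

import Mathlib

/-!  Synthetic (Koszul-style) model of an almost quaternion-Hermitian `4n`-manifold.

`C` plays the role of the commutative ℝ-algebra of smooth functions and `V` that of
the `C`-module of vector fields, equipped with a directional derivative `D`, a Lie
bracket, a Riemannian metric `g` together with its Levi-Civita connection `nab`
(characterised by being torsion-free and metric), a local adapted basis `I, J, K`
of anticommuting almost complex structures with `K = I J`, each compatible with the
metric, and a (local) orthonormal frame.  -/

noncomputable section

open scoped BigOperators

structure AQH (n : ℕ) (C : Type*) (V : Type*) [CommRing C] [Algebra ℝ C]
    [AddCommGroup V] [Module C V] where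
  /-- derivative of a function along a vector field -/
  D : V → C → C
  D_add : ∀ X f g, D X (f + g) = D X f + D X g
  D_mul : ∀ X f g, D X (f * g) = f * D X g + g * D X f
  D_const : ∀ X (r : ℝ), D X (algebraMap ℝ C r) = 0
  D_addX : ∀ X Y f, D (X + Y) f = D X f + D Y f
  D_smulX : ∀ (f : C) (X : V) (h : C), D (f • X) h = f * D X h
  /-- the Lie bracket of vector fields -/
  bracket : V → V → V
  bracket_skew : ∀ X Y, bracket X Y = -bracket Y X
  bracket_add : ∀ X Y Z, bracket X (Y + Z) = bracket X Y + bracket X Z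
  bracket_smul : ∀ X (f : C) Y, bracket X (f • Y) = f • bracket X Y + (D X f) • Y
  bracket_jacobi : ∀ X Y Z,
    bracket X (bracket Y Z) + bracket Y (bracket Z X) + bracket Z (bracket X Y) = 0
  D_bracket : ∀ X Y f, D (bracket X Y) f = D X (D Y f) - D Y (D X f)
  /-- the Riemannian metric -/
  g : V → V → C
  g_symm : ∀ X Y, g X Y = g Y X
  g_add : ∀ X Y Z, g (X + Y) Z = g X Z + g Y Z
  g_smul : ∀ (f : C) X Y, g (f • X) Y = f * g X Y
  /-- the Levi-Civita connection -/
  nab : V → V → V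
  nab_addX : ∀ X Y Z, nab (X + Y) Z = nab X Z + nab Y Z
  nab_smulX : ∀ (f : C) X Y, nab (f • X) Y = f • nab X Y
  nab_add : ∀ X Y Z, nab X (Y + Z) = nab X Y + nab X Z
  nab_leibniz : ∀ X (f : C) Y, nab X (f • Y) = f • nab X Y + (D X f) • Y
  torsion_free : ∀ X Y, nab X Y - nab Y X = bracket X Y
  nab_metric : ∀ X Y Z, D X (g Y Z) = g (nab X Y) Z + g Y (nab X Z)
  /-- the (local) adapted basis of almost complex structures -/
  I : V → V
  J : V → V
  K : V → V
  I_lin : ∀ (f : C) X Y, I (f • X + Y) = f • I X + I Y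
  J_lin : ∀ (f : C) X Y, J (f • X + Y) = f • J X + J Y
  K_lin : ∀ (f : C) X Y, K (f • X + Y) = f • K X + K Y
  I_sq : ∀ X, I (I X) = -X
  J_sq : ∀ X, J (J X) = -X
  K_def : ∀ X, K X = I (J X)
  anticomm : ∀ X, I (J X) = -J (I X)
  I_metric : ∀ X Y, g (I X) (I Y) = g X Y
  J_metric : ∀ X Y, g (J X) (J Y) = g X Y
  /-- a (local) orthonormal frame -/
  frame : Fin (4 * n) → V
  frame_orthonormal : ∀ i j, g (frame i) (frame j) = if i = j then 1 else 0
  frame_span : ∀ X, X = ∑ i, g X (frame i) • frame i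

namespace AQH

section ops

variable {C V : Type*} [CommRing C]

/-- the operator `A_(1)` on covariant 3-tensors -/
def op1 (A : V → V) (ψ : V → V → V → C) : V → V → V → C := fun X Y Z => -ψ (A X) Y Z

/-- the operator `A_(2)` on covariant 3-tensors -/
def op2 (A : V → V) (ψ : V → V → V → C) : V → V → V → C := fun X Y Z => -ψ X (A Y) Z

/-- the operator `A_(3)` on covariant 3-tensors -/
def op3 (A : V → V) (ψ : V → V → V → C) : V → V → V → C := fun X Y Z => -ψ X Y (A Z)

/-- the operator `A_(12) = A_(1) A_(2)` on covariant 3-tensors -/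
def op12 (A : V → V) (ψ : V → V → V → C) : V → V → V → C := fun X Y Z => ψ (A X) (A Y) Z

/-- the operator `A_(13) = A_(1) A_(3)` on covariant 3-tensors -/
def op13 (A : V → V) (ψ : V → V → V → C) : V → V → V → C := fun X Y Z => ψ (A X) Y (A Z)

/-- the operator `A_(23) = A_(2) A_(3)` on covariant 3-tensors -/
def op23 (A : V → V) (ψ : V → V → V → C) : V → V → V → C := fun X Y Z => ψ X (A Y) (A Z)

/-- the operator `𝓛_A = A_(12) + A_(13) + A_(23)` on three-forms -/
def calL (A : V → V) (ψ : V → V → V → C) : V → V → V → C :=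
  fun X Y Z => op12 A ψ X Y Z + op13 A ψ X Y Z + op23 A ψ X Y Z

/-- the action `(A ν)(X) = -ν (A X)` of `A` on a one-form -/
def act1 (A : V → V) (ν : V → C) : V → C := fun X => -ν (A X)

/-- the action `(A ψ)(X,Y,Z) = -ψ(AX,AY,AZ)` of `A` on a three-form -/
def act3 (A : V → V) (ψ : V → V → V → C) : V → V → V → C :=
  fun X Y Z => -ψ (A X) (A Y) (A Z)

/-- wedge product of two one-forms -/
def wedge11 (α β : V → C) : V → V → C := fun X Y => α X * β Y - α Y * β X

/-- wedge product of a one-form and a two-form -/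
def wedge12 (ν : V → C) (ω : V → V → C) : V → V → V → C :=
  fun X Y Z => ν X * ω Y Z - ν Y * ω X Z + ν Z * ω X Y

/-- wedge product of two two-forms -/
def wedge22 (α β : V → V → C) : V → V → V → V → C := fun X Y Z W =>
  α X Y * β Z W - α X Z * β Y W + α X W * β Y Z
    + α Z W * β X Y - α Y W * β X Z + α Y Z * β X W

/-- a (0,3)-tensor is an alternating three-form -/
def IsAlt3 (T : V → V → V → C) : Prop :=
  (∀ X Y Z, T Y X Z = -T X Y Z) ∧ (∀ X Y Z, T X Z Y = -T X Y Z)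

variable [AddCommGroup V] [Module C V]

/-- `C`-linearity (tensoriality) of a three-form in its first argument -/
def Lin3 (T : V → V → V → C) : Prop :=
  ∀ (f : C) X X' Y Z, T (f • X + X') Y Z = f * T X Y Z + T X' Y Z

/-- `C`-linearity (tensoriality) of a one-form -/
def Lin1 (ν : V → C) : Prop := ∀ (f : C) X X', ν (f • X + X') = f * ν X + ν X'

end ops

section derived

variable {n : ℕ} {C V : Type*} [CommRing C] [Algebra ℝ C] [AddCommGroup V] [Module C V]
  [Module ℝ V] [IsScalarTower ℝ C V]

variable (M : AQH n C V)

/-- the Kähler form `ω_A(X,Y) = g(X, A Y)` -/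
def omega (A : V → V) : V → V → C := fun X Y => M.g X (A Y)

/-- `(∇_X A) Y` -/
def nabA (A : V → V) : V → V → V := fun X Y => M.nab X (A Y) - A (M.nab X Y)

/-- covariant derivative of a 2-form: `(∇_X ψ)(Y,Z)` -/
def nab2 (ψ : V → V → C) : V → V → V → C :=
  fun X Y Z => M.D X (ψ Y Z) - ψ (M.nab X Y) Z - ψ Y (M.nab X Z)

/-- covariant derivative of a 4-form -/
def nab4 (ψ : V → V → V → V → C) : V → V → V → V → V → C :=
  fun X Y Z W U => M.D X (ψ Y Z W U) - ψ (M.nab X Y) Z W U - ψ Y (M.nab X Z) W U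
    - ψ Y Z (M.nab X W) U - ψ Y Z W (M.nab X U)

/-- exterior derivative of a one-form -/
def d1 (ν : V → C) : V → V → C :=
  fun X Y => M.D X (ν Y) - M.D Y (ν X) - ν (M.bracket X Y)

/-- exterior derivative of a two-form -/
def d2 (ψ : V → V → C) : V → V → V → C :=
  fun X Y Z => M.D X (ψ Y Z) - M.D Y (ψ X Z) + M.D Z (ψ X Y)
    - ψ (M.bracket X Y) Z + ψ (M.bracket X Z) Y - ψ (M.bracket Y Z) X

/-- exterior derivative of a four-form -/
def d4 (ψ : V → V → V → V → C) : V → V → V → V → V → C := fun X Y Z W U =>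
  M.D X (ψ Y Z W U) - M.D Y (ψ X Z W U) + M.D Z (ψ X Y W U) - M.D W (ψ X Y Z U)
      + M.D U (ψ X Y Z W)
    - ψ (M.bracket X Y) Z W U + ψ (M.bracket X Z) Y W U - ψ (M.bracket X W) Y Z U
      + ψ (M.bracket X U) Y Z W
    - ψ (M.bracket Y Z) X W U + ψ (M.bracket Y W) X Z U - ψ (M.bracket Y U) X Z W
    - ψ (M.bracket Z W) X Y U + ψ (M.bracket Z U) X Y W
    - ψ (M.bracket W U) X Y Z

/-- the Nijenhuis tensor `N_A(X,Y)` -/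
def nijV (A : V → V) : V → V → V := fun X Y =>
  M.bracket X Y + A (M.bracket (A X) Y) + A (M.bracket X (A Y)) - M.bracket (A X) (A Y)

/-- the Nijenhuis `(0,3)`-tensor `N_A(X,Y,Z) = g(X, N_A(Y,Z))` -/
def nij3 (A : V → V) : V → V → V → C := fun X Y Z => M.g X (M.nijV A Y Z)

/-- the induced inner product of two 2-forms,
`⟨ψ,φ⟩ = (1/2!) ψ(e_i,e_j) φ(e_i,e_j)` -/
def inner2 (ψ φ : V → V → C) : C :=
  (1/2 : ℝ) • ∑ i, ∑ j, ψ (M.frame i) (M.frame j) * φ (M.frame i) (M.frame j)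

/-- the contraction `(Λ_A β)(X) = ⟨X ⌟ β, ω_A⟩` of a three-form -/
def Lam (A : V → V) (β : V → V → V → C) : V → C :=
  fun X => (1/2 : ℝ) •
    ∑ i, ∑ j, β X (M.frame i) (M.frame j) * M.omega A (M.frame i) (M.frame j)

/-- `λ_I(X) = (1/2n) ⟨∇_X ω_J, ω_K⟩` -/
def lambdaI : V → C := fun X =>
  (1/(2*(n:ℝ))) • M.inner2 (fun Y Z => M.nab2 (M.omega M.J) X Y Z) (M.omega M.K)

/-- `λ_J(X) = (1/2n) ⟨∇_X ω_K, ω_I⟩` -/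
def lambdaJ : V → C := fun X =>
  (1/(2*(n:ℝ))) • M.inner2 (fun Y Z => M.nab2 (M.omega M.K) X Y Z) (M.omega M.I)

/-- `λ_K(X) = (1/2n) ⟨∇_X ω_I, ω_J⟩` -/
def lambdaK : V → C := fun X =>
  (1/(2*(n:ℝ))) • M.inner2 (fun Y Z => M.nab2 (M.omega M.I) X Y Z) (M.omega M.J)

/-- codifferential of a two-form -/
def codiff2 (ψ : V → V → C) : V → C := fun Z => -∑ i, M.nab2 ψ (M.frame i) (M.frame i) Z

/-- codifferential of a four-form -/
def codiff4 (ψ : V → V → V → V → C) : V → V → V → C :=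
  fun X Y Z => -∑ i, M.nab4 ψ (M.frame i) (M.frame i) X Y Z

/-- `β_I = J dω_J + K dω_K` -/
def betaI : V → V → V → C := fun X Y Z =>
  act3 M.J (M.d2 (M.omega M.J)) X Y Z + act3 M.K (M.d2 (M.omega M.K)) X Y Z

/-- `β_J = K dω_K + I dω_I` -/
def betaJ : V → V → V → C := fun X Y Z =>
  act3 M.K (M.d2 (M.omega M.K)) X Y Z + act3 M.I (M.d2 (M.omega M.I)) X Y Z

/-- `β_K = I dω_I + J dω_J` -/
def betaK : V → V → V → C := fun X Y Z =>
  act3 M.I (M.d2 (M.omega M.I)) X Y Z + act3 M.J (M.d2 (M.omega M.J)) X Y Z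

/-- the intrinsic torsion
`ξ_X Y = -(1/4) Σ_A A (∇_X A) Y + (1/2) Σ_A λ_A(X) A Y` -/
def xi : V → V → V := fun X Y =>
  (-(1/4 : ℝ)) • (M.I (M.nabA M.I X Y) + M.J (M.nabA M.J X Y) + M.K (M.nabA M.K X Y))
    + (1/2 : ℝ) • (M.lambdaI X • M.I Y + M.lambdaJ X • M.J Y + M.lambdaK X • M.K Y)

/-- the one-form `ν^I_4 = I Λ_I β_I` -/
def nu4I : V → C := act1 M.I (M.Lam M.I M.betaI)

/-- the one-form `ν^J_4 = J Λ_J β_J` -/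
def nu4J : V → C := act1 M.J (M.Lam M.J M.betaJ)

/-- the one-form `ν^K_4 = K Λ_K β_K` -/
def nu4K : V → C := act1 M.K (M.Lam M.K M.betaK)

/-- `ν^I_3`, determined by `J Λ_J β_I = (1/(2n-1)) (ν^I_4 + (2n+1)(n-1) ν^I_3)` -/
def nu3I : V → C := fun X =>
  (1/((2*(n:ℝ)+1) * ((n:ℝ)-1))) •
    ((2*(n:ℝ)-1) • act1 M.J (M.Lam M.J M.betaI) X - M.nu4I X)

/-- `ν^J_3`, determined by `K Λ_K β_J = (1/(2n-1)) (ν^J_4 + (2n+1)(n-1) ν^J_3)` -/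
def nu3J : V → C := fun X =>
  (1/((2*(n:ℝ)+1) * ((n:ℝ)-1))) •
    ((2*(n:ℝ)-1) • act1 M.K (M.Lam M.K M.betaJ) X - M.nu4J X)

/-- `ν^K_3`, determined by `I Λ_I β_K = (1/(2n-1)) (ν^K_4 + (2n+1)(n-1) ν^K_3)` -/
def nu3K : V → C := fun X =>
  (1/((2*(n:ℝ)+1) * ((n:ℝ)-1))) •
    ((2*(n:ℝ)-1) • act1 M.I (M.Lam M.I M.betaK) X - M.nu4K X)

/-- `β^{(E)}_{3I} = -(1/2) Jν^I_3 ∧ ω_J - (1/2) Kν^I_3 ∧ ω_K + (1/(2n-1)) Iν^I_3 ∧ ω_I` -/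
def betaE3I : V → V → V → C := fun X Y Z =>
  (-(1/2:ℝ)) • wedge12 (act1 M.J M.nu3I) (M.omega M.J) X Y Z
    + (-(1/2:ℝ)) • wedge12 (act1 M.K M.nu3I) (M.omega M.K) X Y Z
    + (1/(2*(n:ℝ)-1)) • wedge12 (act1 M.I M.nu3I) (M.omega M.I) X Y Z

def betaE3J : V → V → V → C := fun X Y Z =>
  (-(1/2:ℝ)) • wedge12 (act1 M.K M.nu3J) (M.omega M.K) X Y Z
    + (-(1/2:ℝ)) • wedge12 (act1 M.I M.nu3J) (M.omega M.I) X Y Z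
    + (1/(2*(n:ℝ)-1)) • wedge12 (act1 M.J M.nu3J) (M.omega M.J) X Y Z

def betaE3K : V → V → V → C := fun X Y Z =>
  (-(1/2:ℝ)) • wedge12 (act1 M.I M.nu3K) (M.omega M.I) X Y Z
    + (-(1/2:ℝ)) • wedge12 (act1 M.J M.nu3K) (M.omega M.J) X Y Z
    + (1/(2*(n:ℝ)-1)) • wedge12 (act1 M.K M.nu3K) (M.omega M.K) X Y Z

/-- `β_{4I} = -(1/(2n-1)) Iν^I_4 ∧ ω_I` -/
def beta4I : V → V → V → C := fun X Y Z =>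
  (-(1/(2*(n:ℝ)-1))) • wedge12 (act1 M.I M.nu4I) (M.omega M.I) X Y Z

def beta4J : V → V → V → C := fun X Y Z =>
  (-(1/(2*(n:ℝ)-1))) • wedge12 (act1 M.J M.nu4J) (M.omega M.J) X Y Z

def beta4K : V → V → V → C := fun X Y Z =>
  (-(1/(2*(n:ℝ)-1))) • wedge12 (act1 M.K M.nu4K) (M.omega M.K) X Y Z

/-- `β_I^{(3+K)} = β_I - β^{(E)}_{3I} - β_{4I}` -/
def beta3KI : V → V → V → C := fun X Y Z => M.betaI X Y Z - M.betaE3I X Y Z - M.beta4I X Y Z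

def beta3KJ : V → V → V → C := fun X Y Z => M.betaJ X Y Z - M.betaE3J X Y Z - M.beta4J X Y Z

def beta3KK : V → V → V → C := fun X Y Z => M.betaK X Y Z - M.betaE3K X Y Z - M.beta4K X Y Z

/-- `β_I^{(3)} = (1/6) (2 - 𝓛_J - 𝓛_K) β_I^{(3+K)}` -/
def beta3I : V → V → V → C := fun X Y Z =>
  (1/6:ℝ) • ((2:ℝ) • M.beta3KI X Y Z - calL M.J M.beta3KI X Y Z - calL M.K M.beta3KI X Y Z)

def beta3J : V → V → V → C := fun X Y Z =>
  (1/6:ℝ) • ((2:ℝ) • M.beta3KJ X Y Z - calL M.K M.beta3KJ X Y Z - calL M.I M.beta3KJ X Y Z)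

def beta3K : V → V → V → C := fun X Y Z =>
  (1/6:ℝ) • ((2:ℝ) • M.beta3KK X Y Z - calL M.I M.beta3KK X Y Z - calL M.J M.beta3KK X Y Z)

/-- `β_I^{(K)} = (1/6) (4 + 𝓛_J + 𝓛_K) β_I^{(3+K)}` -/
def betaKI : V → V → V → C := fun X Y Z =>
  (1/6:ℝ) • ((4:ℝ) • M.beta3KI X Y Z + calL M.J M.beta3KI X Y Z + calL M.K M.beta3KI X Y Z)

def betaKJ : V → V → V → C := fun X Y Z =>
  (1/6:ℝ) • ((4:ℝ) • M.beta3KJ X Y Z + calL M.K M.beta3KJ X Y Z + calL M.I M.beta3KJ X Y Z)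

def betaKK : V → V → V → C := fun X Y Z =>
  (1/6:ℝ) • ((4:ℝ) • M.beta3KK X Y Z + calL M.I M.beta3KK X Y Z + calL M.J M.beta3KK X Y Z)

/-- the three-form `ψ^{(3)} = (1/12)(β_I^{(3)} + β_J^{(3)} + β_K^{(3)})` determining `ξ_{33}` -/
def psi3 : V → V → V → C := fun X Y Z =>
  (1/12:ℝ) • (M.beta3I X Y Z + M.beta3J X Y Z + M.beta3K X Y Z)

/-- the three-form `ψ^{(K)} = -(1/48)(β_I^{(K)} + β_J^{(K)} + β_K^{(K)})` determining `ξ_{KH}` -/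
def psiK : V → V → V → C := fun X Y Z =>
  (-(1/48:ℝ)) • (M.betaKI X Y Z + M.betaKJ X Y Z + M.betaKK X Y Z)

/-- the three-form `ψ^{(3)}_I` determining `ξ_{3H}` -/
def psi3I : V → V → V → C := fun X Y Z =>
  (-(1/8:ℝ)) • M.beta3I X Y Z
    + (1/48:ℝ) • ((3:ℝ) • (M.beta3I X Y Z + M.beta3J X Y Z + M.beta3K X Y Z)
        + calL M.I (fun a b c => M.beta3I a b c + M.beta3J a b c + M.beta3K a b c) X Y Z)

def psi3J : V → V → V → C := fun X Y Z =>
  (-(1/8:ℝ)) • M.beta3J X Y Z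
    + (1/48:ℝ) • ((3:ℝ) • (M.beta3I X Y Z + M.beta3J X Y Z + M.beta3K X Y Z)
        + calL M.J (fun a b c => M.beta3I a b c + M.beta3J a b c + M.beta3K a b c) X Y Z)

def psi3K : V → V → V → C := fun X Y Z =>
  (-(1/8:ℝ)) • M.beta3K X Y Z
    + (1/48:ℝ) • ((3:ℝ) • (M.beta3I X Y Z + M.beta3J X Y Z + M.beta3K X Y Z)
        + calL M.K (fun a b c => M.beta3I a b c + M.beta3J a b c + M.beta3K a b c) X Y Z)

/-- the three-form `ψ^{(K)}_I` determining `ξ_{K3}` -/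
def psiKI : V → V → V → C := fun X Y Z =>
  (-(1/2:ℝ)) • M.betaKI X Y Z
    + (1/6:ℝ) • (M.betaKI X Y Z + M.betaKJ X Y Z + M.betaKK X Y Z)

def psiKJ : V → V → V → C := fun X Y Z =>
  (-(1/2:ℝ)) • M.betaKJ X Y Z
    + (1/6:ℝ) • (M.betaKI X Y Z + M.betaKJ X Y Z + M.betaKK X Y Z)

def psiKK : V → V → V → C := fun X Y Z =>
  (-(1/2:ℝ)) • M.betaKK X Y Z
    + (1/6:ℝ) • (M.betaKI X Y Z + M.betaKJ X Y Z + M.betaKK X Y Z)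

/-- the one-form `θ^ξ` determining `ξ_{EH}`,
defined by `(6/n)(2n+1)(n-1) θ^ξ(X) = -⟨ξ_{e_i} e_i, X⟩` -/
def thetaXi : V → C := fun X =>
  (-((n:ℝ)/(6*(2*(n:ℝ)+1)*((n:ℝ)-1)))) • ∑ i, M.g (M.xi (M.frame i) (M.frame i)) X

/-- the local one-form `θ^ξ_I`, defined by `(2/n)(2n+1)(n-1) θ^ξ_I(X) = -⟨I ξ_{e_i} I e_i, X⟩` -/
def thetaXiI : V → C := fun X =>
  (-((n:ℝ)/(2*(2*(n:ℝ)+1)*((n:ℝ)-1)))) •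
    ∑ i, M.g (M.I (M.xi (M.frame i) (M.I (M.frame i)))) X

def thetaXiJ : V → C := fun X =>
  (-((n:ℝ)/(2*(2*(n:ℝ)+1)*((n:ℝ)-1)))) •
    ∑ i, M.g (M.J (M.xi (M.frame i) (M.J (M.frame i)))) X

def thetaXiK : V → C := fun X =>
  (-((n:ℝ)/(2*(2*(n:ℝ)+1)*((n:ℝ)-1)))) •
    ∑ i, M.g (M.K (M.xi (M.frame i) (M.K (M.frame i)))) X

/-- `α_I = -λ_I ⊗ g + (1/2)(J_(2) - J_(3)) ∇ω_K` -/
def alphaI : V → V → V → C := fun X Y Z =>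
  -(M.lambdaI X * M.g Y Z)
    + (1/2:ℝ) • (-(M.nab2 (M.omega M.K) X (M.J Y) Z) + M.nab2 (M.omega M.K) X Y (M.J Z))

def alphaJ : V → V → V → C := fun X Y Z =>
  -(M.lambdaJ X * M.g Y Z)
    + (1/2:ℝ) • (-(M.nab2 (M.omega M.I) X (M.K Y) Z) + M.nab2 (M.omega M.I) X Y (M.K Z))

def alphaK : V → V → V → C := fun X Y Z =>
  -(M.lambdaK X * M.g Y Z)
    + (1/2:ℝ) • (-(M.nab2 (M.omega M.J) X (M.I Y) Z) + M.nab2 (M.omega M.J) X Y (M.I Z))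

/-- the one-form `η_I(X) = α_I(e_i; e_i, X)` -/
def etaI : V → C := fun X => ∑ i, M.alphaI (M.frame i) (M.frame i) X

def etaJ : V → C := fun X => ∑ i, M.alphaJ (M.frame i) (M.frame i) X

def etaK : V → C := fun X => ∑ i, M.alphaK (M.frame i) (M.frame i) X

/-- the fundamental four-form `Ω = Σ_A ω_A ∧ ω_A` -/
def Omega4 : V → V → V → V → C := fun X Y Z W =>
  wedge22 (M.omega M.I) (M.omega M.I) X Y Z W
    + wedge22 (M.omega M.J) (M.omega M.J) X Y Z W
    + wedge22 (M.omega M.K) (M.omega M.K) X Y Z W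

/-- the one-form `θ^{d*Ω} = (1/3) Σ_A A Λ_A d*Ω` -/
def thetaDOmega : V → C := fun X =>
  (1/3:ℝ) • (act1 M.I (M.Lam M.I (M.codiff4 M.Omega4)) X
    + act1 M.J (M.Lam M.J (M.codiff4 M.Omega4)) X
    + act1 M.K (M.Lam M.K (M.codiff4 M.Omega4)) X)

/-- the vector-valued torsion: `g(W, T(X,Y)) = T(W,X,Y)` -/
def Tvec (T : V → V → V → C) : V → V → V := fun X Y => ∑ i, T (M.frame i) X Y • M.frame i

/-- the connection `∇ + (1/2) T` associated to a torsion (0,3)-tensor `T` -/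
def nabT (T : V → V → V → C) : V → V → V := fun X Y => M.nab X Y + (1/2:ℝ) • M.Tvec T X Y

/-- a connection is metric -/
def MetricConn (nab' : V → V → V) : Prop :=
  ∀ X Y Z, M.D X (M.g Y Z) = M.g (nab' X Y) Z + M.g Y (nab' X Z)

/-- a connection is quaternionic, with associated local one-forms `γ_I, γ_J, γ_K`:
`∇'_X I = γ_K(X) J - γ_J(X) K`, and cyclically -/
def QuatConn (nab' : V → V → V) (γI γJ γK : V → C) : Prop :=
  (∀ X Y, nab' X (M.I Y) - M.I (nab' X Y) = γK X • M.J Y - γJ X • M.K Y) ∧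
  (∀ X Y, nab' X (M.J Y) - M.J (nab' X Y) = γI X • M.K Y - γK X • M.I Y) ∧
  (∀ X Y, nab' X (M.K Y) - M.K (nab' X Y) = γJ X • M.I Y - γI X • M.J Y)

/-- the HKT condition: `I, J, K` integrable and there is a metric connection
`∇ + (1/2)T` with totally skew torsion making `I, J, K` parallel -/
def IsHKT : Prop :=
  (∀ X Y, M.nijV M.I X Y = 0) ∧ (∀ X Y, M.nijV M.J X Y = 0) ∧
  (∀ X Y, M.nijV M.K X Y = 0) ∧
  ∃ T : V → V → V → C, IsAlt3 T ∧ Lin3 T ∧ M.MetricConn (M.nabT T) ∧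
    (∀ X Y, M.nabT T X (M.I Y) = M.I (M.nabT T X Y)) ∧
    (∀ X Y, M.nabT T X (M.J Y) = M.J (M.nabT T X Y)) ∧
    (∀ X Y, M.nabT T X (M.K Y) = M.K (M.nabT T X Y))

/-- membership of a three-form in `KH`: type `{2,1}` for each `A` and `Λ_A ψ = 0` -/
def InKH3 (ψ : V → V → V → C) : Prop :=
  IsAlt3 ψ ∧ Lin3 ψ ∧
  calL M.I ψ = ψ ∧ calL M.J ψ = ψ ∧ calL M.K ψ = ψ ∧
  M.Lam M.I ψ = 0 ∧ M.Lam M.J ψ = 0 ∧ M.Lam M.K ψ = 0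

/-- the `(0,3)`-tensor of the `KH`-component of the torsion determined by `ψ^{(K)}`:
`3ψ - Σ_A A_(23) ψ` -/
def xiKH3 (ψ : V → V → V → C) : V → V → V → C := fun X Y Z =>
  (3:ℝ) • ψ X Y Z - (op23 M.I ψ X Y Z + op23 M.J ψ X Y Z + op23 M.K ψ X Y Z)

/-- the `(0,3)`-tensor of the `EH`-component of the torsion determined by the
one-form `θ`: `3 e_i ⊗ e_i ∧ θ - Σ_A (e_i ⊗ A e_i ∧ A θ + (2/n) A θ ⊗ ω_A)` -/
def xiEH3 (θ : V → C) : V → V → V → C := fun X Y Z =>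
  (3:ℝ) • ∑ i, M.g (M.frame i) X *
      (M.g (M.frame i) Y * θ Z - M.g (M.frame i) Z * θ Y)
  - ((∑ i, M.g (M.frame i) X *
        (M.g (M.I (M.frame i)) Y * act1 M.I θ Z - M.g (M.I (M.frame i)) Z * act1 M.I θ Y))
    + (∑ i, M.g (M.frame i) X *
        (M.g (M.J (M.frame i)) Y * act1 M.J θ Z - M.g (M.J (M.frame i)) Z * act1 M.J θ Y))
    + (∑ i, M.g (M.frame i) X *
        (M.g (M.K (M.frame i)) Y * act1 M.K θ Z - M.g (M.K (M.frame i)) Z * act1 M.K θ Y)))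
  - (2/(n:ℝ)) • (act1 M.I θ X * M.omega M.I Y Z + act1 M.J θ X * M.omega M.J Y Z
      + act1 M.K θ X * M.omega M.K Y Z)

/-- the intrinsic torsion lies in `(K+E)H`: it is the sum of a `KH`-tensor and an
`EH`-tensor as described in §3 of the paper -/
def inKEH : Prop :=
  ∃ (ψ : V → V → V → C) (θ : V → C), M.InKH3 ψ ∧ Lin1 θ ∧
    ∀ X Y Z, M.g Y (M.xi X Z) = M.xiKH3 ψ X Y Z + M.xiEH3 θ X Y Z

end derived

end AQH

/-!
The three-form `β_I` is the sum of the image of the intrinsic torsion `ξ` under an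
`Sp(n)`-equivariant linear map `betaMap` and of terms `Aλ_B ∧ ω_C` which come from the connection
forms. By equivariance `betaMap` sends each component of `ξ` to a multiple of its parameter, up to
a term in `𝓛_I`. The resulting sum of a primitive three-form and of wedges of one-forms with the
Kähler forms is resolved by traces: `Λ_I` and `Λ_J` recover the one-forms, and
`𝓛_J + 𝓛_K` separates the primitive part, since it has eigenvalue `-4` on the image of `Λ³₀E S³H`
and `2` on the image of `KH`. The formulas for `β_J` and `β_K` follow by rotating the adapted basis
cyclically, and the theorem inverts the linear system so obtained.
-/

namespace AQH

section LinearMaps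

variable {C V W : Type*} [CommRing C] [AddCommGroup V] [Module C V] [AddCommGroup W] [Module C W]

theorem isLinearMap_of_smul_add {A : V → W}
    (h : ∀ (f : C) X Y, A (f • X + Y) = f • A X + A Y) : IsLinearMap C A where
  map_add X Y := by simpa using h 1 X Y
  map_smul f X := by
    have h_zero : A 0 = 0 := by simpa using h 1 0 0
    simpa [h_zero] using h f X 0

theorem isLinearMap_act1 {A : V → V} (hA : IsLinearMap C A) {ν : V → C}
    (hν : IsLinearMap C ν) : IsLinearMap C (act1 A ν) where
  map_add X Y := by simp only [act1, hA.map_add, hν.map_add, neg_add]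
  map_smul f X := by simp only [act1, hA.map_smul, hν.map_smul, smul_neg]

end LinearMaps

section AdaptedBasis

variable {n : ℕ} {C V : Type*} [CommRing C] [Algebra ℝ C] [AddCommGroup V] [Module C V]
variable (M : AQH n C V)

theorem I_isLinearMap : IsLinearMap C M.I := isLinearMap_of_smul_add M.I_lin

theorem J_isLinearMap : IsLinearMap C M.J := isLinearMap_of_smul_add M.J_lin

theorem K_isLinearMap : IsLinearMap C M.K := isLinearMap_of_smul_add M.K_lin

theorem I_add (X Y : V) : M.I (X + Y) = M.I X + M.I Y := M.I_isLinearMap.map_add X Y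

theorem I_sub (X Y : V) : M.I (X - Y) = M.I X - M.I Y := M.I_isLinearMap.map_sub X Y

theorem I_neg (X : V) : M.I (-X) = -M.I X := M.I_isLinearMap.map_neg X

theorem I_smul (f : C) (X : V) : M.I (f • X) = f • M.I X := M.I_isLinearMap.map_smul f X

theorem J_add (X Y : V) : M.J (X + Y) = M.J X + M.J Y := M.J_isLinearMap.map_add X Y

theorem J_sub (X Y : V) : M.J (X - Y) = M.J X - M.J Y := M.J_isLinearMap.map_sub X Y

theorem J_neg (X : V) : M.J (-X) = -M.J X := M.J_isLinearMap.map_neg X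

theorem J_smul (f : C) (X : V) : M.J (f • X) = f • M.J X := M.J_isLinearMap.map_smul f X

theorem J_I (X : V) : M.J (M.I X) = -M.I (M.J X) := by rw [M.anticomm, neg_neg]

theorem K_sq (X : V) : M.K (M.K X) = -X := by
  simp only [M.K_def, M.J_I, M.I_neg, M.I_sq, M.J_sq, neg_neg]

theorem K_metric (X Y : V) : M.g (M.K X) (M.K Y) = M.g X Y := by
  rw [M.K_def, M.K_def, M.I_metric, M.J_metric]

/-- The same almost quaternion-Hermitian manifold with the adapted basis `I, J, K` permuted
cyclically to `J, K, I`: statements about `J` and `K` are obtained from those about `I`. -/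
def rot : AQH n C V :=
  { M with
    I := M.J
    J := M.K
    K := M.I
    I_lin := M.J_lin
    J_lin := M.K_lin
    K_lin := M.I_lin
    I_sq := M.J_sq
    J_sq := M.K_sq
    K_def := fun X => by simp only [M.K_def, M.J_I, M.J_sq, M.I_neg, neg_neg]
    anticomm := fun X => by simp only [M.K_def, M.J_I, M.J_sq, M.I_neg, neg_neg]
    I_metric := M.J_metric
    J_metric := M.K_metric }

theorem K_J (X : V) : M.K (M.J X) = -M.J (M.K X) := M.rot.J_I X

theorem K_I (X : V) : M.K (M.I X) = -M.I (M.K X) :=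
  (neg_eq_iff_eq_neg.mpr (M.rot.rot.J_I X)).symm

end AdaptedBasis

section Metric

variable {n : ℕ} {C V : Type*} [CommRing C] [Algebra ℝ C] [AddCommGroup V] [Module C V]
variable (M : AQH n C V)

theorem g_left_isLinearMap (Y : V) : IsLinearMap C (fun X => M.g X Y) where
  map_add X X' := M.g_add X X' Y
  map_smul f X := M.g_smul f X Y

theorem g_right_isLinearMap (X : V) : IsLinearMap C (fun Y => M.g X Y) := by
  simpa only [M.g_symm X] using M.g_left_isLinearMap X

theorem g_neg_left (X Y : V) : M.g (-X) Y = -M.g X Y := (M.g_left_isLinearMap Y).map_neg X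

theorem g_sub_left (X Y Z : V) : M.g (X - Y) Z = M.g X Z - M.g Y Z :=
  (M.g_left_isLinearMap Z).map_sub X Y

theorem g_add_right (X Y Z : V) : M.g X (Y + Z) = M.g X Y + M.g X Z :=
  (M.g_right_isLinearMap X).map_add Y Z

theorem g_neg_right (X Y : V) : M.g X (-Y) = -M.g X Y := (M.g_right_isLinearMap X).map_neg Y

theorem g_sub_right (X Y Z : V) : M.g X (Y - Z) = M.g X Y - M.g X Z :=
  (M.g_right_isLinearMap X).map_sub Y Z

theorem g_smul_right (f : C) (X Y : V) : M.g X (f • Y) = f * M.g X Y :=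
  (M.g_right_isLinearMap X).map_smul f Y

theorem g_I_left (X Y : V) : M.g (M.I X) Y = -M.g X (M.I Y) := by
  rw [← M.I_metric X (M.I Y), M.I_sq, M.g_neg_right, neg_neg]

theorem g_J_left (X Y : V) : M.g (M.J X) Y = -M.g X (M.J Y) := M.rot.g_I_left X Y

theorem g_K_left (X Y : V) : M.g (M.K X) Y = -M.g X (M.K Y) := M.rot.rot.g_I_left X Y

theorem sum_g_frame_mul {ν : V → C} (hν : IsLinearMap C ν) (X : V) :
    ∑ i, M.g X (M.frame i) * ν (M.frame i) = ν X := by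
  conv_rhs => rw [M.frame_span X]
  exact (Finset.sum_congr rfl fun i _ => (hν.map_smul _ _).symm).trans
    (map_sum (hν.mk' ν) _ _).symm

theorem sum_mul_g_frame {ν : V → C} (hν : IsLinearMap C ν) (X : V) :
    ∑ i, ν (M.frame i) * M.g (M.frame i) X = ν X := by
  simpa only [mul_comm, M.g_symm X] using M.sum_g_frame_mul hν X

end Metric

section IntrinsicTorsion

variable {n : ℕ} {C V : Type*} [CommRing C] [Algebra ℝ C] [AddCommGroup V] [Module C V]
variable (M : AQH n C V)

theorem nab_neg (X Y : V) : M.nab X (-Y) = -M.nab X Y :=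
  map_neg (AddMonoidHom.mk' (M.nab X) (M.nab_add X)) Y

variable [Module ℝ V]

theorem rot_xi : M.rot.xi = M.xi := by
  funext X Y
  change (-(1 / 4 : ℝ)) • (M.J (M.nabA M.J X Y) + M.K (M.nabA M.K X Y) + M.I (M.nabA M.I X Y))
    + (1 / 2 : ℝ) • (M.lambdaJ X • M.J Y + M.lambdaK X • M.K Y + M.lambdaI X • M.I Y)
    = (-(1 / 4 : ℝ)) • (M.I (M.nabA M.I X Y) + M.J (M.nabA M.J X Y) + M.K (M.nabA M.K X Y))
    + (1 / 2 : ℝ) • (M.lambdaI X • M.I Y + M.lambdaJ X • M.J Y + M.lambdaK X • M.K Y)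
  abel_nf

variable [IsScalarTower ℝ C V]

theorem isLinearMap_real {A : V → V} (hA : IsLinearMap C A) : IsLinearMap ℝ A where
  map_add := hA.map_add
  map_smul r X := by rw [← algebraMap_smul C r X, hA.map_smul, algebraMap_smul]

theorem I_real_smul (r : ℝ) (X : V) : M.I (r • X) = r • M.I X :=
  (isLinearMap_real M.I_isLinearMap).map_smul r X

theorem J_real_smul (r : ℝ) (X : V) : M.J (r • X) = r • M.J X :=
  (isLinearMap_real M.J_isLinearMap).map_smul r X

theorem nabA_I_eq (X Y : V) : M.nabA M.I X Y
    = M.lambdaK X • M.J Y - M.lambdaJ X • M.K Y - (M.xi X (M.I Y) - M.I (M.xi X Y)) := by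
  have h_nab : M.I (M.nabA M.I X (M.I Y)) + M.J (M.nabA M.J X (M.I Y))
      + M.K (M.nabA M.K X (M.I Y)) - M.I (M.I (M.nabA M.I X Y) + M.J (M.nabA M.J X Y)
      + M.K (M.nabA M.K X Y)) = (4 : ℝ) • M.nabA M.I X Y := by
    simp only [nabA, M.K_def, M.I_add, M.I_sub, M.J_sub, M.I_neg, M.J_neg, M.J_I, M.I_sq,
      M.J_sq, M.nab_neg]
    module
  have h_lambda : M.lambdaI X • M.I (M.I Y) + M.lambdaJ X • M.J (M.I Y)
      + M.lambdaK X • M.K (M.I Y) - M.I (M.lambdaI X • M.I Y + M.lambdaJ X • M.J Y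
      + M.lambdaK X • M.K Y) = (2 : ℝ) • (M.lambdaK X • M.J Y - M.lambdaJ X • M.K Y) := by
    simp only [M.K_def, M.I_add, M.J_I, M.I_smul, M.I_sq, M.I_neg, two_smul]
    module
  have h_comm : M.xi X (M.I Y) - M.I (M.xi X Y)
      = (1 / 2 : ℝ) • (2 : ℝ) • (M.lambdaK X • M.J Y - M.lambdaJ X • M.K Y)
        - (1 / 4 : ℝ) • (4 : ℝ) • M.nabA M.I X Y := by
    rw [← h_nab, ← h_lambda]
    simp only [xi, M.I_add, M.I_neg, M.I_real_smul, smul_sub, smul_add, neg_smul]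
    abel
  rw [h_comm, smul_smul, smul_smul]
  norm_num

theorem sum_conj_xi (X Y : V) :
    M.I (M.xi X (M.I Y)) + M.J (M.xi X (M.J Y)) + M.K (M.xi X (M.K Y)) = M.xi X Y := by
  simp only [xi, nabA, M.K_def, M.I_add, M.I_sub, M.J_add, M.J_sub, M.I_neg, M.J_neg, M.I_smul,
    M.J_smul, M.I_real_smul, M.J_real_smul, M.J_I, M.I_sq, M.J_sq, M.nab_neg]
  module

end IntrinsicTorsion

section Alternation

variable {C V : Type*} [CommRing C]

/-- The tensor product `ν ⊗ ω` of a one-form and a two-form. -/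
def tensor12 (ν : V → C) (ω : V → V → C) : V → V → V → C := fun X Y Z => ν X * ω Y Z

/-- The alternation of a `(0,3)`-tensor that is already skew in its last two arguments, normalised
so that `d ω` is the alternation of `∇ω` and `ν ∧ ω` that of `ν ⊗ ω`. -/
def alternate (F : V → V → V → C) : V → V → V → C := fun X Y Z => F X Y Z - F Y X Z + F Z X Y

/-- The contribution of the torsion tensor `T(X,Y,Z) = ⟨Y, ξ_X Z⟩` to `A dω_A`: the endomorphism
`A` acts on `T` as a derivation in the last two arguments, the result is alternated and finally
acted on by `A`. -/
def torsionForm (A : V → V) (T : V → V → V → C) : V → V → V → C :=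
  act3 A (alternate (op2 A T + op3 A T))

theorem isLinearMap_alternate [Algebra ℝ C] :
    IsLinearMap ℝ (alternate : (V → V → V → C) → V → V → V → C) where
  map_add F G := by
    funext X Y Z
    simp only [alternate, Pi.add_apply]
    ring
  map_smul r F := by
    funext X Y Z
    simp only [alternate, Pi.smul_apply, smul_sub, smul_add]

theorem isLinearMap_act3 [Algebra ℝ C] (A : V → V) :
    IsLinearMap ℝ (act3 A : (V → V → V → C) → V → V → V → C) where
  map_add F G := by
    funext X Y Z
    simp only [act3, Pi.add_apply, neg_add]
  map_smul r F := by
    funext X Y Z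
    simp only [act3, Pi.smul_apply, smul_neg]

theorem isLinearMap_calL [Algebra ℝ C] (A : V → V) :
    IsLinearMap ℝ (calL A : (V → V → V → C) → V → V → V → C) where
  map_add F G := by
    funext X Y Z
    simp only [calL, op12, op13, op23, Pi.add_apply]
    ring
  map_smul r F := by
    funext X Y Z
    simp only [calL, op12, op13, op23, Pi.smul_apply, smul_add]

theorem isLinearMap_torsionForm [Algebra ℝ C] (A : V → V) :
    IsLinearMap ℝ (torsionForm A : (V → V → V → C) → V → V → V → C) where
  map_add F G := by
    rw [torsionForm, torsionForm, torsionForm, ← (isLinearMap_act3 A).map_add,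
      ← isLinearMap_alternate.map_add]
    congr 2
    funext X Y Z
    simp only [op2, op3, Pi.add_apply]
    ring
  map_smul r F := by
    rw [torsionForm, torsionForm, ← (isLinearMap_act3 A).map_smul,
      ← isLinearMap_alternate.map_smul]
    congr 2
    funext X Y Z
    simp only [op2, op3, Pi.add_apply, Pi.smul_apply, smul_add, smul_neg]

theorem isLinearMap_wedge12 [Algebra ℝ C] (ω : V → V → C) :
    IsLinearMap ℝ (fun ν => wedge12 ν ω) where
  map_add ν ν' := by
    funext X Y Z
    simp only [wedge12, Pi.add_apply]
    ring
  map_smul r ν := by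
    funext X Y Z
    simp only [wedge12, Pi.smul_apply, smul_mul_assoc, smul_sub, smul_add]

theorem alternate_derivation {ψ : V → V → V → C} (hψ : IsAlt3 ψ) (A : V → V) (X Y Z : V) :
    alternate (op2 A ψ + op3 A ψ) X Y Z =
      -(2 * (ψ (A X) Y Z + ψ X (A Y) Z + ψ X Y (A Z))) := by
  simp only [alternate, op2, op3, Pi.add_apply, hψ.1 (A X) Y, hψ.1 X Y, hψ.1 X Z, hψ.1 (A X) Z,
    hψ.2 _ Y Z, hψ.2 _ (A Y) Z]
  ring

theorem alternate_derivation_op23 {ψ : V → V → V → C} (hψ : IsAlt3 ψ) (A B : V → V) (X Y Z : V) :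
    alternate (op2 A (op23 B ψ) + op3 A (op23 B ψ)) X Y Z =
      -(ψ X (B Y) (B (A Z)) + ψ X (B (A Y)) (B Z) + ψ (B X) Y (B (A Z))
        + ψ (B (A X)) Y (B Z) + ψ (B X) (B (A Y)) Z + ψ (B (A X)) (B Y) Z) := by
  simp only [alternate, op2, op3, op23, Pi.add_apply, hψ.1 (B _) Y, hψ.1 (B _) Z, hψ.2 _ _ Z]
  ring

end Alternation

section KahlerForms

variable {n : ℕ} {C V : Type*} [CommRing C] [Algebra ℝ C] [AddCommGroup V] [Module C V]
variable (M : AQH n C V)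

theorem nab2_omega (A : V → V) (X Y Z : V) : M.nab2 (M.omega A) X Y Z = M.g Y (M.nabA A X Z) := by
  simp only [nab2, omega, nabA, M.nab_metric, M.g_sub_right]
  ring

theorem d2_omega {A : V → V} (hA : ∀ X Y, M.g (A X) Y = -M.g X (A Y)) :
    M.d2 (M.omega A) = alternate (M.nab2 (M.omega A)) := by
  have h_symm : ∀ X Y, M.g X (A Y) = -M.g Y (A X) := fun X Y => by rw [M.g_symm, hA]
  funext X Y Z
  simp only [alternate, d2, nab2, omega, ← M.torsion_free, M.g_sub_left]
  rw [h_symm X (M.nab Z Y), h_symm X (M.nab Y Z), h_symm Y (M.nab X Z)]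
  ring

theorem act3_wedge12_omega {A B : V → V} (hA : ∀ X Y, M.g (A X) (A Y) = M.g X Y)
    (hAB : ∀ X, B (A X) = -A (B X)) (ν : V → C) :
    act3 A (wedge12 ν (M.omega B)) = -wedge12 (act1 A ν) (M.omega B) := by
  funext X Y Z
  simp only [act3, wedge12, omega, act1, hAB, M.g_neg_right, hA, Pi.neg_apply]
  ring

end KahlerForms

section TorsionTensor

variable {n : ℕ} {C V : Type*} [CommRing C] [Algebra ℝ C] [AddCommGroup V] [Module C V]
  [Module ℝ V]
variable (M : AQH n C V)

/-- The intrinsic torsion as the `(0,3)`-tensor `⟨Y, ξ_X Z⟩`. -/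
def xiTensor : V → V → V → C := fun X Y Z => M.g Y (M.xi X Z)

theorem rot_xiTensor : M.rot.xiTensor = M.xiTensor := by
  unfold xiTensor
  rw [rot_xi]
  rfl

/-- The `Sp(n)`-equivariant linear map taking a torsion tensor to its contribution to `β_I`. -/
def betaMap {n : ℕ} {C V : Type*} [CommRing C] [Algebra ℝ C] [AddCommGroup V] [Module C V]
    (M : AQH n C V) (T : V → V → V → C) : V → V → V → C :=
  torsionForm M.J T + torsionForm M.K T

variable [IsScalarTower ℝ C V]

theorem nab2_omega_I : M.nab2 (M.omega M.I) = tensor12 M.lambdaK (M.omega M.J)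
    - tensor12 M.lambdaJ (M.omega M.K) + (op2 M.I M.xiTensor + op3 M.I M.xiTensor) := by
  funext X Y Z
  rw [nab2_omega, nabA_I_eq]
  simp only [M.g_sub_right, M.g_smul_right, xiTensor, Pi.add_apply, Pi.sub_apply, tensor12, omega,
    op2, op3, M.g_I_left]
  ring

theorem d2_omega_I : M.d2 (M.omega M.I) = wedge12 M.lambdaK (M.omega M.J)
    - wedge12 M.lambdaJ (M.omega M.K) + alternate (op2 M.I M.xiTensor + op3 M.I M.xiTensor) := by
  rw [M.d2_omega M.g_I_left, nab2_omega_I, isLinearMap_alternate.map_add,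
    (isLinearMap_alternate (C := C)).map_sub]
  rfl

theorem act3_d2_omega_I : act3 M.I (M.d2 (M.omega M.I)) = wedge12 (act1 M.I M.lambdaJ) (M.omega M.K)
    - wedge12 (act1 M.I M.lambdaK) (M.omega M.J) + torsionForm M.I M.xiTensor := by
  rw [d2_omega_I, (isLinearMap_act3 _).map_add, (isLinearMap_act3 (C := C) _).map_sub,
    M.act3_wedge12_omega M.I_metric M.J_I, M.act3_wedge12_omega M.I_metric M.K_I, torsionForm]
  abel

theorem betaI_eq : M.betaI = M.betaMap M.xiTensor
    + (wedge12 (act1 M.J M.lambdaK - act1 M.K M.lambdaJ) (M.omega M.I)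
      + wedge12 (act1 M.K M.lambdaI) (M.omega M.J)
      - wedge12 (act1 M.J M.lambdaI) (M.omega M.K)) := by
  have h_J := M.rot.act3_d2_omega_I
  have h_K := M.rot.rot.act3_d2_omega_I
  rw [rot_xiTensor] at h_J
  rw [rot_xiTensor, rot_xiTensor] at h_K
  rw [(isLinearMap_wedge12 (M.omega M.I)).map_sub]
  calc M.betaI = act3 M.J (M.d2 (M.omega M.J)) + act3 M.K (M.d2 (M.omega M.K)) := rfl
    _ = (wedge12 (act1 M.J M.lambdaK) (M.omega M.I) - wedge12 (act1 M.J M.lambdaI) (M.omega M.K)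
          + torsionForm M.J M.xiTensor)
        + (wedge12 (act1 M.K M.lambdaI) (M.omega M.J) - wedge12 (act1 M.K M.lambdaJ) (M.omega M.I)
          + torsionForm M.K M.xiTensor) := congrArg₂ (· + ·) h_J h_K
    _ = _ := by
      rw [betaMap]
      abel

end TorsionTensor

section ThreeForms

variable {C V : Type*} [CommRing C] [AddCommGroup V] [Module C V]

/-- A three-form: an alternating `C`-trilinear tensor. -/
structure IsThreeForm (ψ : V → V → V → C) : Prop where
  alt : IsAlt3 ψ
  lin : Lin3 ψ

namespace IsThreeForm

variable {ψ : V → V → V → C}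

theorem isLinearMap_left (h : IsThreeForm ψ) (Y Z : V) : IsLinearMap C (fun X => ψ X Y Z) :=
  isLinearMap_of_smul_add fun f X X' => h.lin f X X' Y Z

theorem isLinearMap_middle (h : IsThreeForm ψ) (X Z : V) : IsLinearMap C (fun Y => ψ X Y Z) := by
  have h_eq : (fun Y => ψ X Y Z) = fun Y => -ψ Y X Z := funext fun Y => h.alt.1 Y X Z
  rw [h_eq]
  exact (-(h.isLinearMap_left X Z).mk' _).isLinear

theorem isLinearMap_right (h : IsThreeForm ψ) (X Y : V) : IsLinearMap C (fun Z => ψ X Y Z) := by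
  have h_eq : (fun Z => ψ X Y Z) = fun Z => -ψ X Z Y := funext fun Z => h.alt.2 X Z Y
  rw [h_eq]
  exact (-(h.isLinearMap_middle X Y).mk' _).isLinear

theorem neg_left (h : IsThreeForm ψ) (X Y Z : V) : ψ (-X) Y Z = -ψ X Y Z :=
  (h.isLinearMap_left Y Z).map_neg X

theorem neg_middle (h : IsThreeForm ψ) (X Y Z : V) : ψ X (-Y) Z = -ψ X Y Z :=
  (h.isLinearMap_middle X Z).map_neg Y

theorem neg_right (h : IsThreeForm ψ) (X Y Z : V) : ψ X Y (-Z) = -ψ X Y Z :=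
  (h.isLinearMap_right X Y).map_neg Z

end IsThreeForm

end ThreeForms

section TorsionOfThreeForms

variable {n : ℕ} {C V : Type*} [CommRing C] [Algebra ℝ C] [AddCommGroup V] [Module C V]
variable (M : AQH n C V) {ψ : V → V → V → C}

theorem calL_I_calL_I (hψ : IsThreeForm ψ) :
    calL M.I (calL M.I ψ) = (3 : ℝ) • ψ - (2 : ℝ) • calL M.I ψ := by
  funext X Y Z
  simp only [calL, op12, op13, op23, hψ.neg_left, hψ.neg_middle, hψ.neg_right, M.I_sq, neg_neg,
    Pi.sub_apply, Pi.smul_apply]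
  module

theorem betaMap_threeForm (hψ : IsThreeForm ψ) :
    M.betaMap ψ = (-2 : ℝ) • (calL M.J ψ + calL M.K ψ) := by
  funext X Y Z
  simp only [alternate_derivation hψ.alt, betaMap, torsionForm, act3, calL, op12, op13, op23,
    M.J_sq, M.K_sq, hψ.neg_left, hψ.neg_middle, hψ.neg_right, neg_neg, Pi.add_apply,
    Pi.smul_apply]
  algebra

theorem betaMap_op23_I (hψ : IsThreeForm ψ) : M.betaMap (op23 M.I ψ) = 0 := by
  funext X Y Z
  simp only [alternate_derivation_op23 hψ.alt, betaMap, torsionForm, act3, M.K_def, M.J_I, M.I_sq,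
    M.J_sq, M.I_neg, hψ.neg_left, hψ.neg_middle, hψ.neg_right, neg_neg, Pi.add_apply,
    Pi.zero_apply]
  ring

theorem betaMap_op23_J (hψ : IsThreeForm ψ) :
    M.betaMap (op23 M.J ψ) = calL M.J ψ + calL M.K (calL M.I ψ) := by
  funext X Y Z
  simp only [alternate_derivation_op23 hψ.alt, betaMap, torsionForm, act3, calL, op12, op13, op23,
    M.K_def, M.J_I, M.I_sq, M.J_sq, M.I_neg, M.J_neg, hψ.neg_left, hψ.neg_middle, hψ.neg_right,
    neg_neg, Pi.add_apply]
  ring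

theorem betaMap_op23_K (hψ : IsThreeForm ψ) :
    M.betaMap (op23 M.K ψ) = calL M.K ψ + calL M.J (calL M.I ψ) := by
  funext X Y Z
  simp only [alternate_derivation_op23 hψ.alt, betaMap, torsionForm, act3, calL, op12, op13, op23,
    M.K_def, M.J_I, M.I_sq, M.J_sq, M.I_neg, M.J_neg, hψ.neg_left, hψ.neg_middle, hψ.neg_right,
    neg_neg, Pi.add_apply]
  ring

end TorsionOfThreeForms

section TorsionComponents

variable {n : ℕ} {C V : Type*} [CommRing C] [Algebra ℝ C] [AddCommGroup V] [Module C V]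

/-- A three-form without `E`-component: the contractions `Λ_I`, `Λ_J`, `Λ_K` all annihilate it. -/
structure IsPrimitive (M : AQH n C V) (ψ : V → V → V → C) : Prop extends IsThreeForm ψ where
  Lam_I : M.Lam M.I ψ = 0
  Lam_J : M.Lam M.J ψ = 0
  Lam_K : M.Lam M.K ψ = 0

/-- A section of `Λ³₀E S³H`, which is the eigenspace of `𝓛_I + 𝓛_J + 𝓛_K` with eigenvalue `-3`
in the primitive three-forms; on the complement `KH` each `𝓛_A` is the identity. -/
structure InLambda3S3H (M : AQH n C V) (ψ : V → V → V → C) : Prop extends M.IsPrimitive ψ where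
  casimir : calL M.I ψ + calL M.J ψ + calL M.K ψ = (-3 : ℝ) • ψ

/-- The torsion tensor `Σ_A A_(23) ψ_A` built from three local three-forms. -/
def sumOp23 (M : AQH n C V) (ψI ψJ ψK : V → V → V → C) : V → V → V → C :=
  op23 M.I ψI + op23 M.J ψJ + op23 M.K ψK

variable {M : AQH n C V} {ψ ψI ψJ ψK : V → V → V → C}

theorem IsPrimitive.rot (h : M.IsPrimitive ψ) : M.rot.IsPrimitive ψ :=
  { h with Lam_I := h.Lam_J, Lam_J := h.Lam_K, Lam_K := h.Lam_I }

theorem InLambda3S3H.rot (h : M.InLambda3S3H ψ) : M.rot.InLambda3S3H ψ where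
  toIsPrimitive := h.toIsPrimitive.rot
  casimir := by
    rw [← h.casimir]
    change calL M.J ψ + calL M.K ψ + calL M.I ψ = _
    abel

theorem InLambda3S3H.of_forall (h_alt : IsAlt3 ψ) (h_lin : Lin3 ψ)
    (h_casimir : ∀ X Y Z, calL M.I ψ X Y Z + calL M.J ψ X Y Z + calL M.K ψ X Y Z
      = -((3 : ℝ) • ψ X Y Z))
    (h_I : M.Lam M.I ψ = 0) (h_J : M.Lam M.J ψ = 0) (h_K : M.Lam M.K ψ = 0) :
    M.InLambda3S3H ψ where
  alt := h_alt
  lin := h_lin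
  Lam_I := h_I
  Lam_J := h_J
  Lam_K := h_K
  casimir := by
    funext X Y Z
    exact (h_casimir X Y Z).trans (neg_smul _ _).symm

theorem InKH3.rot (h : M.InKH3 ψ) : M.rot.InKH3 ψ :=
  have ⟨h_alt, h_lin, h_I, h_J, h_K, h_Lam_I, h_Lam_J, h_Lam_K⟩ := h
  ⟨h_alt, h_lin, h_J, h_K, h_I, h_Lam_J, h_Lam_K, h_Lam_I⟩

theorem InKH3.isPrimitive (h : M.InKH3 ψ) : M.IsPrimitive ψ :=
  have ⟨h_alt, h_lin, _, _, _, h_Lam_I, h_Lam_J, h_Lam_K⟩ := h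
  { alt := h_alt, lin := h_lin, Lam_I := h_Lam_I, Lam_J := h_Lam_J, Lam_K := h_Lam_K }

theorem InKH3.calL_I (h : M.InKH3 ψ) : calL M.I ψ = ψ := h.2.2.1

theorem InKH3.calL_J (h : M.InKH3 ψ) : calL M.J ψ = ψ := h.rot.calL_I

theorem InKH3.calL_K (h : M.InKH3 ψ) : calL M.K ψ = ψ := h.rot.rot.calL_I

theorem sumOp23_rot : M.rot.sumOp23 ψJ ψK ψI = M.sumOp23 ψI ψJ ψK := by
  change op23 M.J ψJ + op23 M.K ψK + op23 M.I ψI = op23 M.I ψI + op23 M.J ψJ + op23 M.K ψK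
  abel

theorem isLinearMap_betaMap : IsLinearMap ℝ M.betaMap :=
  (((isLinearMap_torsionForm M.J).mk' _) + ((isLinearMap_torsionForm M.K).mk' _)).isLinear

theorem betaMap_sumOp23 (hI : IsThreeForm ψI) :
    M.betaMap (M.sumOp23 ψI ψJ ψK) = M.betaMap (op23 M.J ψJ) + M.betaMap (op23 M.K ψK) := by
  rw [sumOp23, isLinearMap_betaMap.map_add, isLinearMap_betaMap.map_add, M.betaMap_op23_I hI,
    zero_add]

theorem InLambda3S3H.calL_J_add_calL_K (h : M.InLambda3S3H ψ) :
    calL M.J ψ + calL M.K ψ = (-3 : ℝ) • ψ - calL M.I ψ := by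
  rw [← h.casimir]
  abel

theorem InLambda3S3H.betaMap (h : M.InLambda3S3H ψ) :
    M.betaMap ψ = (6 : ℝ) • ψ + (2 : ℝ) • calL M.I ψ := by
  rw [M.betaMap_threeForm h.toIsThreeForm, h.calL_J_add_calL_K]
  module

theorem InLambda3S3H.betaMap_op23_J (h : M.InLambda3S3H ψ) (h_type : calL M.J ψ = ψ) :
    M.betaMap (op23 M.J ψ) = (6 : ℝ) • ψ + (2 : ℝ) • calL M.I ψ := by
  have h_I : calL M.I ψ = (-4 : ℝ) • ψ - calL M.K ψ := by
    linear_combination (norm := module) h.casimir - h_type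
  have h_KK : calL M.K (calL M.K ψ) = (3 : ℝ) • ψ - (2 : ℝ) • calL M.K ψ :=
    M.rot.rot.calL_I_calL_I h.toIsThreeForm
  rw [M.betaMap_op23_J h.toIsThreeForm, h_I, (isLinearMap_calL (C := C) M.K).map_sub,
    (isLinearMap_calL M.K).map_smul, h_KK, h_type]
  module

theorem InLambda3S3H.betaMap_op23_K (h : M.InLambda3S3H ψ) (h_type : calL M.K ψ = ψ) :
    M.betaMap (op23 M.K ψ) = (6 : ℝ) • ψ + (2 : ℝ) • calL M.I ψ := by
  have h_I : calL M.I ψ = (-4 : ℝ) • ψ - calL M.J ψ := by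
    linear_combination (norm := module) h.casimir - h_type
  have h_JJ : calL M.J (calL M.J ψ) = (3 : ℝ) • ψ - (2 : ℝ) • calL M.J ψ :=
    M.rot.calL_I_calL_I h.toIsThreeForm
  rw [M.betaMap_op23_K h.toIsThreeForm, h_I, (isLinearMap_calL (C := C) M.J).map_sub,
    (isLinearMap_calL M.J).map_smul, h_JJ, h_type]
  module

theorem betaMap_sumOp23_of_inLambda3S3H (hI : IsThreeForm ψI) (hI_type : calL M.I ψI = ψI)
    (hJ : M.InLambda3S3H ψJ) (hJ_type : calL M.J ψJ = ψJ) (hK : M.InLambda3S3H ψK)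
    (hK_type : calL M.K ψK = ψK) (h_sum : ψI + ψJ + ψK = 0) :
    M.betaMap (M.sumOp23 ψI ψJ ψK) = (-8 : ℝ) • ψI := by
  have h_JK : ψJ + ψK = (-1 : ℝ) • ψI := by
    linear_combination (norm := module) h_sum
  have h_calL : calL M.I ψJ + calL M.I ψK = (-1 : ℝ) • ψI := by
    rw [← (isLinearMap_calL M.I).map_add, h_JK, (isLinearMap_calL M.I).map_smul, hI_type]
  rw [betaMap_sumOp23 hI, hJ.betaMap_op23_J hJ_type, hK.betaMap_op23_K hK_type]
  linear_combination (norm := module) (6 : ℝ) • h_JK + (2 : ℝ) • h_calL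

theorem InKH3.betaMap (h : M.InKH3 ψ) : M.betaMap ψ = (-4 : ℝ) • ψ := by
  rw [M.betaMap_threeForm h.isPrimitive.toIsThreeForm, h.calL_J, h.calL_K]
  module

theorem InKH3.betaMap_op23_J (h : M.InKH3 ψ) : M.betaMap (op23 M.J ψ) = (2 : ℝ) • ψ := by
  rw [M.betaMap_op23_J h.isPrimitive.toIsThreeForm, h.calL_I, h.calL_J, h.calL_K, two_smul]

theorem InKH3.betaMap_op23_K (h : M.InKH3 ψ) : M.betaMap (op23 M.K ψ) = (2 : ℝ) • ψ := by
  rw [M.betaMap_op23_K h.isPrimitive.toIsThreeForm, h.calL_I, h.calL_J, h.calL_K, two_smul]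

theorem betaMap_sumOp23_of_inKH3 (hI : IsThreeForm ψI) (hJ : M.InKH3 ψJ) (hK : M.InKH3 ψK)
    (h_sum : ψI + ψJ + ψK = 0) : M.betaMap (M.sumOp23 ψI ψJ ψK) = (-2 : ℝ) • ψI := by
  rw [betaMap_sumOp23 hI, hJ.betaMap_op23_J, hK.betaMap_op23_K]
  linear_combination (norm := module) (2 : ℝ) • h_sum

theorem xiKH3_eq (ψ : V → V → V → C) : M.xiKH3 ψ = (3 : ℝ) • ψ - M.sumOp23 ψ ψ ψ := rfl

theorem xiKH3_rot (ψ : V → V → V → C) : M.rot.xiKH3 ψ = M.xiKH3 ψ := by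
  rw [xiKH3_eq, xiKH3_eq, sumOp23_rot]

theorem InKH3.betaMap_xiKH3 (h : M.InKH3 ψ) : M.betaMap (M.xiKH3 ψ) = (-16 : ℝ) • ψ := by
  rw [xiKH3_eq, (isLinearMap_betaMap (M := M)).map_sub, isLinearMap_betaMap.map_smul,
    betaMap_sumOp23 h.isPrimitive.toIsThreeForm, h.betaMap, h.betaMap_op23_J, h.betaMap_op23_K]
  module

end TorsionComponents

section AlmostHermitian

variable {n : ℕ} {C V : Type*} [CommRing C] [Algebra ℝ C] [AddCommGroup V] [Module C V]

/-- An almost complex structure `A` compatible with the metric of `M`. -/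
structure IsAlmostHermitian (M : AQH n C V) (A : V → V) : Prop where
  isLinearMap : IsLinearMap C A
  sq : ∀ X, A (A X) = -X
  g_left : ∀ X Y, M.g (A X) Y = -M.g X (A Y)

/-- The three-form `Aν ∧ ω_A`. -/
def omegaWedge (M : AQH n C V) (A : V → V) (ν : V → C) : V → V → V → C :=
  wedge12 (act1 A ν) (M.omega A)

/-- The torsion tensor `Aν ⊗ ω_A`. -/
def omegaTensor (M : AQH n C V) (A : V → V) (ν : V → C) : V → V → V → C :=
  tensor12 (act1 A ν) (M.omega A)

/-- The torsion tensor `e_i ⊗ e_i ∧ ν`. -/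
def metricWedge (M : AQH n C V) (ν : V → C) : V → V → V → C :=
  fun X Y Z => M.g X Y * ν Z - M.g X Z * ν Y

variable {M : AQH n C V} {A B : V → V} {ν : V → C}

theorem isAlmostHermitian_I : M.IsAlmostHermitian M.I := ⟨M.I_isLinearMap, M.I_sq, M.g_I_left⟩

theorem isAlmostHermitian_J : M.IsAlmostHermitian M.J := ⟨M.J_isLinearMap, M.J_sq, M.g_J_left⟩

theorem isAlmostHermitian_K : M.IsAlmostHermitian M.K := ⟨M.K_isLinearMap, M.K_sq, M.g_K_left⟩

theorem isLinearMap_omegaWedge (A : V → V) : IsLinearMap ℝ (M.omegaWedge A) where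
  map_add ν ν' := by
    funext X Y Z
    simp only [omegaWedge, wedge12, act1, Pi.add_apply]
    ring
  map_smul r ν := by
    funext X Y Z
    simp only [omegaWedge, wedge12, act1, Pi.smul_apply]
    algebra

theorem omegaWedge_comp_comm (hAB : ∀ X, B (A X) = -A (B X)) (hν : IsLinearMap C ν) :
    M.omegaWedge (B ∘ A) ν = M.omegaWedge (A ∘ B) ν := by
  funext X Y Z
  simp only [omegaWedge, wedge12, omega, act1, Function.comp_apply, hAB, hν.map_neg, M.g_neg_right]
  ring

namespace IsAlmostHermitian

theorem map_neg (hA : M.IsAlmostHermitian A) (X : V) : A (-X) = -A X := hA.isLinearMap.map_neg X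

theorem omega_swap (hA : M.IsAlmostHermitian A) (X Y : V) : M.omega A Y X = -M.omega A X Y := by
  rw [omega, omega, M.g_symm, hA.g_left]

theorem isThreeForm_omegaWedge (hA : M.IsAlmostHermitian A) (hν : IsLinearMap C ν) :
    IsThreeForm (M.omegaWedge A ν) where
  alt := by
    constructor <;> intro X Y Z <;> simp only [omegaWedge, wedge12]
    · rw [hA.omega_swap X Y]
      ring
    · rw [hA.omega_swap Y Z]
      ring
  lin f X X' Y Z := by
    simp only [omegaWedge, wedge12, omega, (isLinearMap_act1 hA.isLinearMap hν).map_add,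
      (isLinearMap_act1 hA.isLinearMap hν).map_smul, M.g_add, M.g_smul, smul_eq_mul]
    ring

theorem calL_omegaWedge_self (hA : M.IsAlmostHermitian A) (hν : IsLinearMap C ν) :
    calL A (M.omegaWedge A ν) = M.omegaWedge A ν := by
  funext X Y Z
  simp only [calL, op12, op13, op23, omegaWedge, wedge12, omega, act1, hA.g_left, hA.sq, hA.map_neg,
    hν.map_neg, M.g_neg_right]
  ring

theorem calL_omegaWedge (hA : M.IsAlmostHermitian A) (hB : M.IsAlmostHermitian B)
    (hAB : ∀ X, B (A X) = -A (B X)) :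
    calL B (M.omegaWedge A ν) = (2 : ℝ) • M.omegaWedge (A ∘ B) ν - M.omegaWedge A ν := by
  funext X Y Z
  simp only [calL, op12, op13, op23, omegaWedge, wedge12, omega, act1, hB.g_left, hAB, hB.sq,
    hA.map_neg, M.g_neg_right, Function.comp_apply, Pi.sub_apply, Pi.smul_apply]
  algebra

theorem torsionForm_omegaTensor_self (hA : M.IsAlmostHermitian A) :
    torsionForm A (M.omegaTensor A ν) = 0 := by
  funext X Y Z
  simp only [torsionForm, act3, alternate, op2, op3, omegaTensor, tensor12, omega, hA.g_left,
    Pi.add_apply, Pi.zero_apply]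
  ring

theorem torsionForm_omegaTensor (hA : M.IsAlmostHermitian A) (hB : M.IsAlmostHermitian B)
    (hAB : ∀ X, B (A X) = -A (B X)) :
    torsionForm B (M.omegaTensor A ν) = (-2 : ℝ) • M.omegaWedge (A ∘ B) ν := by
  funext X Y Z
  simp only [torsionForm, act3, alternate, op2, op3, omegaTensor, omegaWedge, tensor12, wedge12,
    omega, act1, hB.g_left, hAB, hB.sq, hA.map_neg, hB.map_neg, M.g_neg_left, M.g_neg_right,
    Function.comp_apply, Pi.add_apply, Pi.smul_apply]
  algebra

theorem torsionForm_metricWedge (hA : M.IsAlmostHermitian A) (hν : IsLinearMap C ν) :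
    torsionForm A (M.metricWedge ν) = (-2 : ℝ) • M.omegaWedge A ν := by
  funext X Y Z
  simp only [torsionForm, act3, alternate, op2, op3, metricWedge, omegaWedge, wedge12,
    omega, act1, hA.g_left, hA.sq, hA.map_neg, hν.map_neg, M.g_neg_right, Pi.add_apply,
    Pi.smul_apply]
  rw [M.g_symm Y X, M.g_symm Z X, M.g_symm Z Y, ← neg_eq_iff_eq_neg.mpr (hA.g_left X Y),
    ← neg_eq_iff_eq_neg.mpr (hA.g_left X Z), ← neg_eq_iff_eq_neg.mpr (hA.g_left Y Z),
    M.g_symm (A X), M.g_symm (A X), M.g_symm (A Y)]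
  algebra

end IsAlmostHermitian

end AlmostHermitian

section TorsionOfOneForms

variable {n : ℕ} {C V : Type*} [CommRing C] [Algebra ℝ C] [AddCommGroup V] [Module C V]
variable {M : AQH n C V} {ν : V → C}

theorem I_comp_J : M.I ∘ M.J = M.K := funext fun X => (M.K_def X).symm

theorem J_comp_K : M.J ∘ M.K = M.I := M.rot.I_comp_J

theorem K_comp_I : M.K ∘ M.I = M.J := M.rot.rot.I_comp_J

theorem calL_J_omegaWedge_I :
    calL M.J (M.omegaWedge M.I ν) = (2 : ℝ) • M.omegaWedge M.K ν - M.omegaWedge M.I ν := by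
  rw [isAlmostHermitian_I.calL_omegaWedge isAlmostHermitian_J M.J_I, I_comp_J]

theorem calL_K_omegaWedge_I (hν : IsLinearMap C ν) :
    calL M.K (M.omegaWedge M.I ν) = (2 : ℝ) • M.omegaWedge M.J ν - M.omegaWedge M.I ν := by
  rw [isAlmostHermitian_I.calL_omegaWedge isAlmostHermitian_K M.K_I,
    ← omegaWedge_comp_comm M.K_I hν, K_comp_I]

theorem betaMap_omegaWedge_I (hν : IsLinearMap C ν) : M.betaMap (M.omegaWedge M.I ν)
    = (4 : ℝ) • M.omegaWedge M.I ν
      - (4 : ℝ) • (M.omegaWedge M.J ν + M.omegaWedge M.K ν) := by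
  rw [M.betaMap_threeForm (isAlmostHermitian_I.isThreeForm_omegaWedge hν), calL_J_omegaWedge_I,
    calL_K_omegaWedge_I hν]
  module

theorem betaMap_omegaWedge_J (hν : IsLinearMap C ν) :
    M.betaMap (M.omegaWedge M.J ν) = (-4 : ℝ) • M.omegaWedge M.I ν := by
  have h_K : calL M.K (M.omegaWedge M.J ν) = (2 : ℝ) • M.omegaWedge M.I ν - M.omegaWedge M.J ν :=
    M.rot.calL_J_omegaWedge_I
  rw [M.betaMap_threeForm (isAlmostHermitian_J.isThreeForm_omegaWedge hν),
    isAlmostHermitian_J.calL_omegaWedge_self hν, h_K]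
  module

theorem betaMap_omegaWedge_K (hν : IsLinearMap C ν) :
    M.betaMap (M.omegaWedge M.K ν) = (-4 : ℝ) • M.omegaWedge M.I ν := by
  have h_J : calL M.J (M.omegaWedge M.K ν) = (2 : ℝ) • M.omegaWedge M.I ν - M.omegaWedge M.K ν :=
    M.rot.rot.calL_K_omegaWedge_I hν
  rw [M.betaMap_threeForm (isAlmostHermitian_K.isThreeForm_omegaWedge hν),
    isAlmostHermitian_K.calL_omegaWedge_self hν, h_J]
  module

theorem betaMap_omegaTensor_I (hν : IsLinearMap C ν) : M.betaMap (M.omegaTensor M.I ν)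
    = (-2 : ℝ) • (M.omegaWedge M.J ν + M.omegaWedge M.K ν) := by
  rw [betaMap, isAlmostHermitian_I.torsionForm_omegaTensor isAlmostHermitian_J M.J_I,
    isAlmostHermitian_I.torsionForm_omegaTensor isAlmostHermitian_K M.K_I,
    ← omegaWedge_comp_comm M.K_I hν, I_comp_J, K_comp_I]
  module

theorem betaMap_omegaTensor_J :
    M.betaMap (M.omegaTensor M.J ν) = (-2 : ℝ) • M.omegaWedge M.I ν := by
  rw [betaMap, isAlmostHermitian_J.torsionForm_omegaTensor_self,
    isAlmostHermitian_J.torsionForm_omegaTensor isAlmostHermitian_K M.K_J, J_comp_K, zero_add]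

theorem betaMap_omegaTensor_K (hν : IsLinearMap C ν) :
    M.betaMap (M.omegaTensor M.K ν) = (-2 : ℝ) • M.omegaWedge M.I ν := by
  have h_JK : ∀ X, M.J (M.K X) = -M.K (M.J X) := fun X => by rw [K_J, neg_neg]
  rw [betaMap, isAlmostHermitian_K.torsionForm_omegaTensor_self,
    isAlmostHermitian_K.torsionForm_omegaTensor isAlmostHermitian_J h_JK,
    ← omegaWedge_comp_comm h_JK hν, J_comp_K, add_zero]

theorem betaMap_metricWedge (hν : IsLinearMap C ν) : M.betaMap (M.metricWedge ν)
    = (-2 : ℝ) • (M.omegaWedge M.J ν + M.omegaWedge M.K ν) := by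
  rw [betaMap, isAlmostHermitian_J.torsionForm_metricWedge hν,
    isAlmostHermitian_K.torsionForm_metricWedge hν]
  module

end TorsionOfOneForms

section TorsionOfTypeE

variable {n : ℕ} {C V : Type*} [CommRing C] [Algebra ℝ C] [AddCommGroup V] [Module C V]

/-- The `E S³H`-component of the torsion determined by three local one-forms with
`α_I + α_J + α_K = 0`, that is `(1/n) Σ_A (n Aα_A ∧ ω_A - (n-1) Aα_A ⊗ ω_A)`. -/
def xiE33 (M : AQH n C V) (αI αJ αK : V → C) : V → V → V → C :=
  (1 / (n : ℝ)) •
    (((n : ℝ) • M.omegaWedge M.I αI - ((n : ℝ) - 1) • M.omegaTensor M.I αI)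
      + ((n : ℝ) • M.omegaWedge M.J αJ - ((n : ℝ) - 1) • M.omegaTensor M.J αJ)
      + ((n : ℝ) • M.omegaWedge M.K αK - ((n : ℝ) - 1) • M.omegaTensor M.K αK))

variable {M : AQH n C V} {αI αJ αK θ : V → C}

theorem xiE33_rot : M.rot.xiE33 αJ αK αI = M.xiE33 αI αJ αK := by
  change (1 / (n : ℝ)) •
    (((n : ℝ) • M.omegaWedge M.J αJ - ((n : ℝ) - 1) • M.omegaTensor M.J αJ)
      + ((n : ℝ) • M.omegaWedge M.K αK - ((n : ℝ) - 1) • M.omegaTensor M.K αK)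
      + ((n : ℝ) • M.omegaWedge M.I αI - ((n : ℝ) - 1) • M.omegaTensor M.I αI)) = _
  rw [xiE33]
  module

theorem betaMap_xiE33 (hn : n ≠ 0) (hI : IsLinearMap C αI) (hJ : IsLinearMap C αJ)
    (hK : IsLinearMap C αK) (h_sum : αI + αJ + αK = 0) : M.betaMap (M.xiE33 αI αJ αK)
    = (6 + 2 / (n : ℝ)) • M.omegaWedge M.I αI
      - (2 + 2 / (n : ℝ)) • (M.omegaWedge M.J αI + M.omegaWedge M.K αI) := by
  have h_JK : M.omegaWedge M.I αJ + M.omegaWedge M.I αK = (-1 : ℝ) • M.omegaWedge M.I αI := by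
    rw [← (isLinearMap_omegaWedge M.I).map_add, ← (isLinearMap_omegaWedge M.I).map_smul]
    congr 1
    linear_combination (norm := module) h_sum
  have hn' : (n : ℝ) ≠ 0 := Nat.cast_ne_zero.mpr hn
  rw [xiE33]
  simp only [isLinearMap_betaMap.map_add, (isLinearMap_betaMap (M := M)).map_sub,
    isLinearMap_betaMap.map_smul, betaMap_omegaWedge_I hI, betaMap_omegaWedge_J hJ,
    betaMap_omegaWedge_K hK, betaMap_omegaTensor_I hI, betaMap_omegaTensor_J,
    betaMap_omegaTensor_K hK]
  linear_combination (norm := skip) (-2 - 2 / (n : ℝ)) • h_JK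
  match_scalars <;> field_simp <;> ring

theorem sum_frame_mul_wedge (F : Fin (4 * n) → V) (ν : V → C) (X Y Z : V) :
    ∑ i, M.g (M.frame i) X * (M.g (F i) Y * ν Z - M.g (F i) Z * ν Y)
      = (∑ i, M.g X (M.frame i) * M.g (F i) Y) * ν Z
        - (∑ i, M.g X (M.frame i) * M.g (F i) Z) * ν Y := by
  rw [Finset.sum_mul, Finset.sum_mul, ← Finset.sum_sub_distrib]
  exact Finset.sum_congr rfl fun i _ => by rw [M.g_symm _ X]; ring

theorem sum_frame_metricWedge (ν : V → C) (X Y Z : V) :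
    ∑ i, M.g (M.frame i) X * (M.g (M.frame i) Y * ν Z - M.g (M.frame i) Z * ν Y)
      = M.metricWedge ν X Y Z := by
  rw [sum_frame_mul_wedge, M.sum_g_frame_mul (M.g_left_isLinearMap Y),
    M.sum_g_frame_mul (M.g_left_isLinearMap Z), metricWedge]

theorem IsAlmostHermitian.sum_frame_wedge {A : V → V} (hA : M.IsAlmostHermitian A) (ν : V → C)
    (X Y Z : V) :
    ∑ i, M.g (M.frame i) X * (M.g (A (M.frame i)) Y * act1 A ν Z
        - M.g (A (M.frame i)) Z * act1 A ν Y)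
      = M.omegaTensor A ν X Y Z - M.omegaWedge A ν X Y Z := by
  have h_frame : ∀ W, ∑ i, M.g X (M.frame i) * M.g (A (M.frame i)) W = -M.omega A X W := fun W => by
    simp only [hA.g_left, mul_neg, Finset.sum_neg_distrib, M.sum_g_frame_mul
      (M.g_left_isLinearMap (A W)), omega]
  rw [sum_frame_mul_wedge (fun i => A (M.frame i)), h_frame, h_frame, omegaTensor, omegaWedge,
    tensor12, wedge12]
  ring

theorem xiEH3_eq (θ : V → C) : M.xiEH3 θ = (3 : ℝ) • M.metricWedge θ
    + (M.omegaWedge M.I θ + M.omegaWedge M.J θ + M.omegaWedge M.K θ)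
    - (1 + 2 / (n : ℝ)) • (M.omegaTensor M.I θ + M.omegaTensor M.J θ + M.omegaTensor M.K θ) := by
  funext X Y Z
  rw [xiEH3, sum_frame_metricWedge, isAlmostHermitian_I.sum_frame_wedge,
    isAlmostHermitian_J.sum_frame_wedge, isAlmostHermitian_K.sum_frame_wedge]
  simp only [Pi.add_apply, Pi.sub_apply, Pi.smul_apply, omegaTensor, tensor12]
  module

theorem xiEH3_rot (θ : V → C) : M.rot.xiEH3 θ = M.xiEH3 θ := by
  rw [xiEH3_eq, xiEH3_eq]
  change (3 : ℝ) • M.metricWedge θ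
    + (M.omegaWedge M.J θ + M.omegaWedge M.K θ + M.omegaWedge M.I θ)
    - (1 + 2 / (n : ℝ)) • (M.omegaTensor M.J θ + M.omegaTensor M.K θ + M.omegaTensor M.I θ) = _
  module

theorem betaMap_xiEH3 (hθ : IsLinearMap C θ) : M.betaMap (M.xiEH3 θ)
    = (8 / (n : ℝ)) • M.omegaWedge M.I θ
      - (8 - 4 / (n : ℝ)) • (M.omegaWedge M.J θ + M.omegaWedge M.K θ) := by
  rw [xiEH3_eq]
  simp only [isLinearMap_betaMap.map_add, (isLinearMap_betaMap (M := M)).map_sub,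
    isLinearMap_betaMap.map_smul, betaMap_metricWedge hθ, betaMap_omegaWedge_I hθ,
    betaMap_omegaWedge_J hθ, betaMap_omegaWedge_K hθ, betaMap_omegaTensor_I hθ,
    betaMap_omegaTensor_J, betaMap_omegaTensor_K hθ]
  module

end TorsionOfTypeE

section CalL

variable {C V : Type*} [CommRing C] [AddCommGroup V] [Module C V]

theorem IsThreeForm.calL {ψ : V → V → V → C} (hψ : IsThreeForm ψ) {A : V → V}
    (hA : IsLinearMap C A) :
    IsThreeForm (calL A ψ) where
  alt := by
    constructor <;> intro X Y Z <;> simp only [AQH.calL, op12, op13, op23]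
    · rw [hψ.alt.1 (A X) (A Y) Z, hψ.alt.1 X (A Y) (A Z), hψ.alt.1 (A X) Y (A Z)]
      ring
    · rw [hψ.alt.2 (A X) Y (A Z), hψ.alt.2 (A X) (A Y) Z, hψ.alt.2 X (A Y) (A Z)]
      ring
  lin f X X' Y Z := by
    simp only [AQH.calL, op12, op13, op23, hA.map_add, hA.map_smul, hψ.lin f]
    ring

end CalL

section Contraction

variable {n : ℕ} {C V : Type*} [CommRing C] [Algebra ℝ C] [AddCommGroup V] [Module C V]
variable {M : AQH n C V} {A B : V → V} {ψ : V → V → V → C} {ν : V → C}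

theorem isLinearMap_Lam (A : V → V) : IsLinearMap ℝ (M.Lam A) where
  map_add β β' := by
    funext X
    simp only [Lam, Pi.add_apply, add_mul, Finset.sum_add_distrib, smul_add]
  map_smul r β := by
    funext X
    simp only [Lam, Pi.smul_apply, smul_mul_assoc, ← Finset.smul_sum]
    rw [smul_comm]

theorem IsThreeForm.Lam_eq (hψ : IsThreeForm ψ) (X : V) :
    M.Lam A ψ X = (1 / 2 : ℝ) • ∑ i, ψ X (A (M.frame i)) (M.frame i) := by
  rw [Lam, Finset.sum_comm]
  congr 1
  exact Finset.sum_congr rfl fun j _ => M.sum_mul_g_frame (hψ.isLinearMap_middle X _) _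

namespace IsAlmostHermitian

theorem sum_frame_swap (hA : M.IsAlmostHermitian A) {F : V → V → C}
    (hF_left : ∀ Y, IsLinearMap C fun X => F X Y) (hF_right : ∀ X, IsLinearMap C (F X)) :
    ∑ i, F (M.frame i) (A (M.frame i)) = -∑ i, F (A (M.frame i)) (M.frame i) := by
  simp only [← fun i => M.sum_g_frame_mul (hF_right (M.frame i)) (A (M.frame i)),
    ← fun i => M.sum_mul_g_frame (hF_left (M.frame i)) (A (M.frame i))]
  rw [Finset.sum_comm, ← Finset.sum_neg_distrib]
  refine Finset.sum_congr rfl fun i _ => ?_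
  rw [← Finset.sum_neg_distrib]
  refine Finset.sum_congr rfl fun j _ => ?_
  rw [hA.g_left]
  ring

theorem Lam_calL_self (hA : M.IsAlmostHermitian A) (hψ : IsThreeForm ψ) :
    M.Lam A (calL A ψ) = M.Lam A ψ := by
  funext X
  have h_swap := hA.sum_frame_swap (F := fun Y Z => ψ (A X) (A Y) Z)
    (fun Z => (((hψ.isLinearMap_middle (A X) Z).mk' _).comp (hA.isLinearMap.mk' _)).isLinear)
    (fun Y => hψ.isLinearMap_right (A X) (A Y))
  simp only [(hψ.calL hA.isLinearMap).Lam_eq, hψ.Lam_eq, calL, op12, op13, op23, hA.sq,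
    hψ.neg_middle, Finset.sum_add_distrib, Finset.sum_neg_distrib] at h_swap ⊢
  simp only [h_swap, hψ.alt.2 X _ (A _), Finset.sum_neg_distrib]
  module

theorem Lam_calL (hA : M.IsAlmostHermitian A) (hB : M.IsAlmostHermitian B)
    (hAB : ∀ X, B (A X) = -A (B X)) (hψ : IsThreeForm ψ) (X : V) :
    M.Lam B (calL A ψ) X = (2 : ℝ) • M.Lam (A ∘ B) ψ (A X) - M.Lam B ψ X := by
  have h_swap (F : V → V) (hF : IsLinearMap C F) (W : V) :=
    hA.sum_frame_swap (F := fun Y Z => ψ W (F Y) Z)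
      (fun Z => (((hψ.isLinearMap_middle W Z).mk' _).comp (hF.mk' _)).isLinear)
      (fun Y => hψ.isLinearMap_right W (F Y))
  have h_swap₁ := h_swap B hB.isLinearMap (A X)
  have h_swap₂ := h_swap (A ∘ B)
    ((hA.isLinearMap.mk' _).comp (hB.isLinearMap.mk' _)).isLinear X
  simp only [(hψ.calL hA.isLinearMap).Lam_eq, hψ.Lam_eq, calL, op12, op13, op23, hA.sq, hAB,
    hA.map_neg, hψ.neg_middle, Finset.sum_add_distrib, Finset.sum_neg_distrib, Function.comp_apply,
    neg_neg] at h_swap₁ h_swap₂ ⊢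
  rw [h_swap₁, h_swap₂]
  module

theorem g_map_map_eq_zero (hA : M.IsAlmostHermitian A) (hB : M.IsAlmostHermitian B)
    (hAB : ∀ X, B (A X) = -A (B X)) (X : V) : M.g (B X) (A X) = 0 := by
  have : IsAddTorsionFree C := .of_isTorsionFree ℝ C
  rw [← self_eq_neg]
  conv_lhs => rw [hB.g_left, hAB, M.g_neg_right, neg_neg, M.g_symm]
  rw [hA.g_left, M.g_symm]

theorem sum_g_frame_self (hA : M.IsAlmostHermitian A) :
    ∑ i, M.g (A (M.frame i)) (A (M.frame i)) = (4 * n : ℝ) • (1 : C) := by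
  simp only [hA.g_left, hA.sq, M.g_neg_right, neg_neg, M.frame_orthonormal, if_true,
    Finset.sum_const, Finset.card_univ, Fintype.card_fin]
  rw [← Nat.cast_smul_eq_nsmul ℝ]
  push_cast
  rfl

theorem Lam_omegaWedge_apply (hA : M.IsAlmostHermitian A) (hB : M.IsAlmostHermitian B)
    (hν : IsLinearMap C ν) (X : V) :
    M.Lam B (M.omegaWedge A ν) X
      = (1 / 2 : ℝ) • ((∑ i, M.g (B (M.frame i)) (A (M.frame i))) * act1 A ν X)
        + act1 A ν (B (A X)) := by
  have hν' := isLinearMap_act1 hA.isLinearMap hν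
  have hν'' : IsLinearMap C fun Y => act1 A ν (B Y) :=
    ((hν'.mk' _).comp (hB.isLinearMap.mk' _)).isLinear
  have h_left : ∑ i, act1 A ν (B (M.frame i)) * M.g X (A (M.frame i))
      = -act1 A ν (B (A X)) := by
    rw [← M.sum_mul_g_frame hν'' (A X), ← Finset.sum_neg_distrib]
    refine Finset.sum_congr rfl fun i _ => ?_
    rw [M.g_symm _ (A X), hA.g_left, mul_neg, neg_neg]
  have h_right : ∑ i, act1 A ν (M.frame i) * M.g X (A (B (M.frame i)))
      = act1 A ν (B (A X)) := by
    rw [← M.sum_mul_g_frame hν' (B (A X))]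
    refine Finset.sum_congr rfl fun i _ => ?_
    rw [M.g_symm _ (B (A X)), hB.g_left, hA.g_left, neg_neg]
  rw [(hA.isThreeForm_omegaWedge hν).Lam_eq]
  simp only [omegaWedge, wedge12, omega, Finset.sum_add_distrib, Finset.sum_sub_distrib,
    ← Finset.mul_sum, h_left, h_right]
  algebra

theorem Lam_omegaWedge_self (hA : M.IsAlmostHermitian A) (hν : IsLinearMap C ν) :
    M.Lam A (M.omegaWedge A ν) = (2 * n - 1 : ℝ) • act1 A ν := by
  funext X
  rw [hA.Lam_omegaWedge_apply hA hν, hA.sum_g_frame_self, hA.sq,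
    (isLinearMap_act1 hA.isLinearMap hν).map_neg, Pi.smul_apply]
  algebra

theorem Lam_omegaWedge (hA : M.IsAlmostHermitian A) (hB : M.IsAlmostHermitian B)
    (hAB : ∀ X, B (A X) = -A (B X)) (hν : IsLinearMap C ν) :
    M.Lam B (M.omegaWedge A ν) = act1 B ν := by
  funext X
  rw [hA.Lam_omegaWedge_apply hB hν,
    Finset.sum_eq_zero fun i _ => hA.g_map_map_eq_zero hB hAB (M.frame i), zero_mul, smul_zero,
    zero_add, act1, act1, hAB, hA.map_neg, hA.sq, neg_neg]

end IsAlmostHermitian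

end Contraction

section Act1

variable {C V : Type*} [CommRing C] [Algebra ℝ C]

theorem isLinearMap_real_act1 (A : V → V) : IsLinearMap ℝ (act1 A : (V → C) → V → C) where
  map_add ν ν' := funext fun X => neg_add (ν (A X)) (ν' (A X))
  map_smul r ν := funext fun X => (smul_neg r (ν (A X))).symm

end Act1

section TraceSplitting

variable {n : ℕ} {C V : Type*} [CommRing C] [Algebra ℝ C] [AddCommGroup V] [Module C V]

/-- A splitting `β_I = P + Iq ∧ ω_I - (1/2)(Jν ∧ ω_J + Kν ∧ ω_K)` into a three-form annihilated
by `Λ_I` and `Λ_J` and a part of type `E` described by two one-forms. -/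
structure BetaISplitting (M : AQH n C V) (P : V → V → V → C) (q ν : V → C) : Prop where
  Lam_I : M.Lam M.I P = 0
  Lam_J : M.Lam M.J P = 0
  isLinearMap_q : IsLinearMap C q
  isLinearMap_ν : IsLinearMap C ν
  betaI_eq : M.betaI
    = P + M.omegaWedge M.I q - (1 / 2 : ℝ) • (M.omegaWedge M.J ν + M.omegaWedge M.K ν)

variable {M : AQH n C V} {ψ P : V → V → V → C} {q ν : V → C}

theorem IsPrimitive.Lam_I_calL_I (h : M.IsPrimitive ψ) : M.Lam M.I (calL M.I ψ) = 0 := by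
  rw [isAlmostHermitian_I.Lam_calL_self h.toIsThreeForm, h.Lam_I]

theorem IsPrimitive.Lam_J_calL_I (h : M.IsPrimitive ψ) : M.Lam M.J (calL M.I ψ) = 0 := by
  funext X
  rw [isAlmostHermitian_I.Lam_calL isAlmostHermitian_J M.J_I h.toIsThreeForm, I_comp_J, h.Lam_K,
    h.Lam_J]
  simp only [Pi.zero_apply, smul_zero, sub_zero]

theorem IsAlmostHermitian.act1_act1 {A : V → V} (hA : M.IsAlmostHermitian A)
    (hν : IsLinearMap C ν) : act1 A (act1 A ν) = -ν := by
  funext X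
  simp only [act1, hA.sq, hν.map_neg, neg_neg, Pi.neg_apply]

namespace BetaISplitting

theorem Lam_betaI (h : M.BetaISplitting P q ν) (A : V → V) :
    M.Lam A M.betaI = M.Lam A P + M.Lam A (M.omegaWedge M.I q)
      - (1 / 2 : ℝ) • (M.Lam A (M.omegaWedge M.J ν) + M.Lam A (M.omegaWedge M.K ν)) := by
  have hA := isLinearMap_Lam (M := M) A
  rw [h.betaI_eq, hA.map_sub, hA.map_add, hA.map_smul, hA.map_add]

theorem Lam_I_betaI (h : M.BetaISplitting P q ν) :
    M.Lam M.I M.betaI = (2 * n - 1 : ℝ) • act1 M.I q - act1 M.I ν := by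
  have h_IJ (X : V) : M.I (M.J X) = -M.J (M.I X) := M.anticomm X
  have h_IK (X : V) : M.I (M.K X) = -M.K (M.I X) := by rw [M.K_I, neg_neg]
  rw [h.Lam_betaI, h.Lam_I, isAlmostHermitian_I.Lam_omegaWedge_self h.isLinearMap_q,
    isAlmostHermitian_J.Lam_omegaWedge isAlmostHermitian_I h_IJ h.isLinearMap_ν,
    isAlmostHermitian_K.Lam_omegaWedge isAlmostHermitian_I h_IK h.isLinearMap_ν]
  module

theorem Lam_J_betaI (h : M.BetaISplitting P q ν) :
    M.Lam M.J M.betaI = act1 M.J q - (n : ℝ) • act1 M.J ν := by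
  have h_JK (X : V) : M.J (M.K X) = -M.K (M.J X) := by rw [M.K_J, neg_neg]
  rw [h.Lam_betaI, h.Lam_J,
    isAlmostHermitian_I.Lam_omegaWedge isAlmostHermitian_J M.J_I h.isLinearMap_q,
    isAlmostHermitian_J.Lam_omegaWedge_self h.isLinearMap_ν,
    isAlmostHermitian_K.Lam_omegaWedge isAlmostHermitian_J h_JK h.isLinearMap_ν]
  module

theorem nu4I_eq (h : M.BetaISplitting P q ν) : M.nu4I = ν - (2 * n - 1 : ℝ) • q := by
  have h_act := isLinearMap_real_act1 (C := C) M.I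
  rw [nu4I, h.Lam_I_betaI, h_act.map_sub, h_act.map_smul,
    isAlmostHermitian_I.act1_act1 h.isLinearMap_q,
    isAlmostHermitian_I.act1_act1 h.isLinearMap_ν]
  module

theorem nu3I_eq (h : M.BetaISplitting P q ν) (hn : 1 < n) : M.nu3I = ν := by
  have h_n1 : (n : ℝ) - 1 ≠ 0 := sub_ne_zero.mpr (by exact_mod_cast hn.ne')
  have h_act := isLinearMap_real_act1 (C := C) M.J
  have h_J : act1 M.J (M.Lam M.J M.betaI) = (n : ℝ) • ν - q := by
    rw [h.Lam_J_betaI, h_act.map_sub, h_act.map_smul, isAlmostHermitian_J.act1_act1 h.isLinearMap_q,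
      isAlmostHermitian_J.act1_act1 h.isLinearMap_ν]
    module
  change (1 / ((2 * (n : ℝ) + 1) * ((n : ℝ) - 1))) •
    ((2 * (n : ℝ) - 1) • act1 M.J (M.Lam M.J M.betaI) - M.nu4I) = ν
  rw [h_J, h.nu4I_eq]
  match_scalars <;> field_simp <;> ring

theorem beta3KI_eq (h : M.BetaISplitting P q ν) (hn : 1 < n) : M.beta3KI = P := by
  have h_n : 2 * (n : ℝ) - 1 ≠ 0 := by
    have : (1 : ℝ) < n := by exact_mod_cast hn
    linarith
  have h_linear := isLinearMap_omegaWedge (M := M) M.I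
  have h_beta4I : M.beta4I
      = M.omegaWedge M.I q - (1 / (2 * n - 1) : ℝ) • M.omegaWedge M.I ν := by
    change (-(1 / (2 * (n : ℝ) - 1))) • M.omegaWedge M.I M.nu4I = _
    rw [h.nu4I_eq, h_linear.map_sub, h_linear.map_smul]
    match_scalars <;> field_simp
  have h_betaE3I : M.betaE3I = (1 / (2 * n - 1) : ℝ) • M.omegaWedge M.I ν
      - (1 / 2 : ℝ) • (M.omegaWedge M.J ν + M.omegaWedge M.K ν) := by
    rw [← h.nu3I_eq hn]
    change (-(1 / 2 : ℝ)) • M.omegaWedge M.J M.nu3I + (-(1 / 2 : ℝ)) • M.omegaWedge M.K M.nu3I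
      + (1 / (2 * (n : ℝ) - 1)) • M.omegaWedge M.I M.nu3I = _
    module
  change M.betaI - M.betaE3I - M.beta4I = P
  rw [h.betaI_eq, h_betaE3I, h_beta4I]
  module

end BetaISplitting

end TraceSplitting

section ConnectionForms

variable {n : ℕ} {C V : Type*} [CommRing C] [Algebra ℝ C] [AddCommGroup V] [Module C V]
variable (M : AQH n C V)

theorem isLinearMap_nab2_omega {A : V → V} (hA : IsLinearMap C A) (Y Z : V) :
    IsLinearMap C (fun X => M.nab2 (M.omega A) X Y Z) where
  map_add X X' := by
    simp only [nab2, omega, M.D_addX, M.nab_addX, hA.map_add, M.g_add, M.g_add_right]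
    ring
  map_smul f X := by
    simp only [nab2, omega, M.D_smulX, M.nab_smulX, hA.map_smul, M.g_smul, M.g_smul_right,
      smul_eq_mul]
    ring

theorem isLinearMap_smul_inner2_nab2_omega {A : V → V} (hA : IsLinearMap C A) (r : ℝ)
    (φ : V → V → C) :
    IsLinearMap C (fun X => r • M.inner2 (fun Y Z => M.nab2 (M.omega A) X Y Z) φ) where
  map_add X X' := by
    simp only [inner2, (M.isLinearMap_nab2_omega hA _ _).map_add, add_mul, Finset.sum_add_distrib,
      smul_add]
  map_smul f X := by
    simp only [inner2, (M.isLinearMap_nab2_omega hA _ _).map_smul, smul_mul_assoc,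
      ← Finset.smul_sum, smul_comm _ f]

theorem isLinearMap_lambdaI : IsLinearMap C M.lambdaI :=
  M.isLinearMap_smul_inner2_nab2_omega M.J_isLinearMap _ _

theorem isLinearMap_lambdaJ : IsLinearMap C M.lambdaJ := M.rot.isLinearMap_lambdaI

theorem isLinearMap_lambdaK : IsLinearMap C M.lambdaK := M.rot.rot.isLinearMap_lambdaI

variable [Module ℝ V] [IsScalarTower ℝ C V]

theorem betaI_eq_omegaWedge : M.betaI = M.betaMap M.xiTensor
    - M.omegaWedge M.I (act1 M.J M.lambdaJ + act1 M.K M.lambdaK)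
    - (M.omegaWedge M.J (act1 M.I M.lambdaI) + M.omegaWedge M.K (act1 M.I M.lambdaI)) := by
  have h_I : act1 M.I (act1 M.J M.lambdaJ + act1 M.K M.lambdaK)
      = -(act1 M.J M.lambdaK - act1 M.K M.lambdaJ) := by
    funext X
    simp only [act1, Pi.add_apply, Pi.sub_apply, Pi.neg_apply, M.J_I, ← M.K_def, M.K_I,
      M.isLinearMap_lambdaJ.map_neg, M.isLinearMap_lambdaK.map_neg]
    simp only [M.K_def, M.I_sq, M.isLinearMap_lambdaK.map_neg]
    ring
  have h_J : act1 M.J (act1 M.I M.lambdaI) = (-1 : ℝ) • act1 M.K M.lambdaI := by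
    funext X
    simp only [act1, M.K_def, Pi.smul_apply, neg_smul, one_smul]
  have h_K : act1 M.K (act1 M.I M.lambdaI) = act1 M.J M.lambdaI := by
    funext X
    simp only [act1, M.K_def, M.I_sq, M.isLinearMap_lambdaI.map_neg, neg_neg]
  rw [M.betaI_eq, omegaWedge, omegaWedge, omegaWedge, h_I, h_J, h_K,
    (isLinearMap_wedge12 (C := C) _).map_neg, (isLinearMap_wedge12 _).map_smul]
  module

end ConnectionForms

section TorsionOneForms

variable {n : ℕ} {C V : Type*} [CommRing C] [Algebra ℝ C] [AddCommGroup V] [Module C V]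

theorem isLinearMap_smul_sum_g (M : AQH n C V) (r : ℝ) (F : Fin (4 * n) → V) :
    IsLinearMap C (fun X => r • ∑ i, M.g (F i) X) where
  map_add X X' := by
    simp only [M.g_add_right, Finset.sum_add_distrib, smul_add]
  map_smul f X := by
    simp only [(M.g_right_isLinearMap _).map_smul, ← Finset.smul_sum, smul_comm _ f]

variable [Module ℝ V] (M : AQH n C V)

theorem isLinearMap_thetaXi : IsLinearMap C M.thetaXi := M.isLinearMap_smul_sum_g _ _

theorem isLinearMap_thetaXiI : IsLinearMap C M.thetaXiI := M.isLinearMap_smul_sum_g _ _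

theorem rot_thetaXi : M.rot.thetaXi = M.thetaXi := by
  unfold thetaXi
  rw [rot_xi]
  rfl

theorem rot_thetaXiI : M.rot.thetaXiI = M.thetaXiJ := by
  unfold thetaXiI thetaXiJ
  rw [rot_xi]
  rfl

theorem rot_thetaXiJ : M.rot.thetaXiJ = M.thetaXiK := by
  unfold thetaXiJ thetaXiK
  rw [rot_xi]
  rfl

theorem rot_thetaXiK : M.rot.thetaXiK = M.thetaXiI := by
  unfold thetaXiK thetaXiI
  rw [rot_xi]
  rfl

theorem isLinearMap_thetaXiJ : IsLinearMap C M.thetaXiJ :=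
  M.rot_thetaXiI ▸ M.rot.isLinearMap_thetaXiI

theorem isLinearMap_thetaXiK : IsLinearMap C M.thetaXiK :=
  M.rot_thetaXiJ ▸ M.rot.isLinearMap_thetaXiJ

theorem thetaXiI_add_thetaXiJ_add_thetaXiK [IsScalarTower ℝ C V] :
    M.thetaXiI + M.thetaXiJ + M.thetaXiK = (3 : ℝ) • M.thetaXi := by
  funext X
  simp only [Pi.add_apply, Pi.smul_apply, thetaXiI, thetaXiJ, thetaXiK, thetaXi]
  rw [← smul_add, ← smul_add, ← Finset.sum_add_distrib, ← Finset.sum_add_distrib]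
  simp only [← M.g_add, M.sum_conj_xi, smul_smul]
  congr 1
  rw [mul_assoc 6, mul_assoc 2]
  generalize (2 * (n : ℝ) + 1) * ((n : ℝ) - 1) = m
  rw [← div_div, ← div_div]
  ring

end TorsionOneForms

section TorsionDecomposition

variable {n : ℕ} {C V : Type*} [CommRing C] [Algebra ℝ C] [AddCommGroup V] [Module C V]
  [Module ℝ V]

/-- The decomposition of the intrinsic torsion `⟨Y, ξ_X Z⟩` into its six components, with the
components of types `33`, `3H`, `KH`, `K3` parametrised by three-forms and those of types `EH`,
`E3` by the one-forms `θ^ξ` and `θ^ξ_A - θ^ξ`. -/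
structure TorsionDecomposition (M : AQH n C V)
    (ψ3 ψ3I ψ3J ψ3K ψK ψKI ψKJ ψKK : V → V → V → C) : Prop where
  psi3 : M.InLambda3S3H ψ3
  psi3I : M.InLambda3S3H ψ3I
  psi3J : M.InLambda3S3H ψ3J
  psi3K : M.InLambda3S3H ψ3K
  calL_psi3I : calL M.I ψ3I = ψ3I
  calL_psi3J : calL M.J ψ3J = ψ3J
  calL_psi3K : calL M.K ψ3K = ψ3K
  sum_psi3 : ψ3I + ψ3J + ψ3K = 0
  psiK : M.InKH3 ψK
  psiKI : M.InKH3 ψKI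
  psiKJ : M.InKH3 ψKJ
  psiKK : M.InKH3 ψKK
  sum_psiK : ψKI + ψKJ + ψKK = 0
  xiTensor_eq : M.xiTensor = ψ3 + M.sumOp23 ψKI ψKJ ψKK
    + M.xiE33 (M.thetaXiI - M.thetaXi) (M.thetaXiJ - M.thetaXi) (M.thetaXiK - M.thetaXi)
    + M.sumOp23 ψ3I ψ3J ψ3K + M.xiKH3 ψK + M.xiEH3 M.thetaXi

namespace TorsionDecomposition

variable {M : AQH n C V} {ψ3 ψ3I ψ3J ψ3K ψK ψKI ψKJ ψKK : V → V → V → C}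

theorem rot (d : M.TorsionDecomposition ψ3 ψ3I ψ3J ψ3K ψK ψKI ψKJ ψKK) :
    M.rot.TorsionDecomposition ψ3 ψ3J ψ3K ψ3I ψK ψKJ ψKK ψKI where
  psi3 := d.psi3.rot
  psi3I := d.psi3J.rot
  psi3J := d.psi3K.rot
  psi3K := d.psi3I.rot
  calL_psi3I := d.calL_psi3J
  calL_psi3J := d.calL_psi3K
  calL_psi3K := d.calL_psi3I
  sum_psi3 := by rw [← d.sum_psi3]; abel
  psiK := d.psiK.rot
  psiKI := d.psiKJ.rot
  psiKJ := d.psiKK.rot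
  psiKK := d.psiKI.rot
  sum_psiK := by rw [← d.sum_psiK]; abel
  xiTensor_eq := by
    rw [rot_xiTensor, rot_thetaXi, rot_thetaXiI, rot_thetaXiJ, rot_thetaXiK, sumOp23_rot,
      sumOp23_rot, xiE33_rot, xiKH3_rot, xiEH3_rot, d.xiTensor_eq]

variable [IsScalarTower ℝ C V]

theorem betaMap_xiTensor (d : M.TorsionDecomposition ψ3 ψ3I ψ3J ψ3K ψK ψKI ψKJ ψKK)
    (hn : n ≠ 0) : M.betaMap M.xiTensor
    = ((6 : ℝ) • ψ3 + (2 : ℝ) • calL M.I ψ3 - (8 : ℝ) • ψ3I)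
      + ((-16 : ℝ) • ψK - (2 : ℝ) • ψKI)
      + M.omegaWedge M.I ((6 + 2 / (n : ℝ)) • (M.thetaXiI - M.thetaXi)
          + (8 / (n : ℝ)) • M.thetaXi)
      - (M.omegaWedge M.J ((2 + 2 / (n : ℝ)) • (M.thetaXiI - M.thetaXi)
          + (8 - 4 / (n : ℝ)) • M.thetaXi)
        + M.omegaWedge M.K ((2 + 2 / (n : ℝ)) • (M.thetaXiI - M.thetaXi)
          + (8 - 4 / (n : ℝ)) • M.thetaXi)) := by
  have hθ := M.isLinearMap_thetaXi
  have h_sum : (M.thetaXiI - M.thetaXi) + (M.thetaXiJ - M.thetaXi) + (M.thetaXiK - M.thetaXi)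
      = 0 := by
    linear_combination (norm := module) M.thetaXiI_add_thetaXiJ_add_thetaXiK
  have h_linear {α : V → C} (hα : IsLinearMap C α) : IsLinearMap C (α - M.thetaXi) :=
    (hα.mk' α - hθ.mk' _).isLinear
  have h_E33 := betaMap_xiE33 (M := M) hn (h_linear M.isLinearMap_thetaXiI)
    (h_linear M.isLinearMap_thetaXiJ) (h_linear M.isLinearMap_thetaXiK) h_sum
  have h_3H := betaMap_sumOp23_of_inLambda3S3H d.psi3I.toIsThreeForm d.calL_psi3I d.psi3J
    d.calL_psi3J d.psi3K d.calL_psi3K d.sum_psi3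
  have h_K3 := betaMap_sumOp23_of_inKH3 d.psiKI.isPrimitive.toIsThreeForm d.psiKJ d.psiKK
    d.sum_psiK
  rw [d.xiTensor_eq]
  simp only [isLinearMap_betaMap.map_add, d.psi3.betaMap, h_K3, h_E33, h_3H, d.psiK.betaMap_xiKH3,
    betaMap_xiEH3 hθ, (isLinearMap_omegaWedge _).map_add, (isLinearMap_omegaWedge _).map_smul]
  module

end TorsionDecomposition

end TorsionDecomposition

section Projections

variable {n : ℕ} {C V : Type*} [CommRing C] [Algebra ℝ C] [AddCommGroup V] [Module C V]
variable {M : AQH n C V} {ψ P Q : V → V → V → C}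

theorem beta3I_eq_of_beta3KI (h : M.beta3KI = P + Q)
    (hP : calL M.J P + calL M.K P = (-4 : ℝ) • P) (hQ : calL M.J Q + calL M.K Q = (2 : ℝ) • Q) :
    M.beta3I = P := by
  change (1 / 6 : ℝ) • ((2 : ℝ) • M.beta3KI - calL M.J M.beta3KI - calL M.K M.beta3KI) = P
  rw [h, (isLinearMap_calL _).map_add, (isLinearMap_calL _).map_add]
  linear_combination (norm := module) (-(1 / 6 : ℝ)) • (hP + hQ)

theorem betaKI_eq_of_beta3KI (h : M.beta3KI = P + Q)
    (hP : calL M.J P + calL M.K P = (-4 : ℝ) • P) (hQ : calL M.J Q + calL M.K Q = (2 : ℝ) • Q) :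
    M.betaKI = Q := by
  change (1 / 6 : ℝ) • ((4 : ℝ) • M.beta3KI + calL M.J M.beta3KI + calL M.K M.beta3KI) = Q
  rw [h, (isLinearMap_calL _).map_add, (isLinearMap_calL _).map_add]
  linear_combination (norm := module) (1 / 6 : ℝ) • (hP + hQ)

theorem calL_J_calL_I_add_calL_K_calL_I (hψ : IsThreeForm ψ) :
    calL M.J (calL M.I ψ) + calL M.K (calL M.I ψ) = calL M.J ψ + calL M.K ψ := by
  funext X Y Z
  simp only [calL, op12, op13, op23, Pi.add_apply, M.K_def, M.I_sq, hψ.neg_left,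
    hψ.neg_middle, hψ.neg_right, neg_neg]
  ring

theorem InLambda3S3H.calL_J_add_calL_K_betaMap (h : M.InLambda3S3H ψ) :
    calL M.J ((6 : ℝ) • ψ + (2 : ℝ) • calL M.I ψ) + calL M.K ((6 : ℝ) • ψ + (2 : ℝ) • calL M.I ψ)
      = (-4 : ℝ) • ((6 : ℝ) • ψ + (2 : ℝ) • calL M.I ψ) := by
  simp only [(isLinearMap_calL _).map_add, (isLinearMap_calL _).map_smul]
  linear_combination (norm := module) (2 : ℝ) • calL_J_calL_I_add_calL_K_calL_I h.toIsThreeForm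
    + (8 : ℝ) • h.calL_J_add_calL_K

end Projections

namespace TorsionDecomposition

variable {n : ℕ} {C V : Type*} [CommRing C] [Algebra ℝ C] [AddCommGroup V] [Module C V]
  [Module ℝ V]
variable {M : AQH n C V} {ψ3 ψ3I ψ3J ψ3K ψK ψKI ψKJ ψKK : V → V → V → C}

theorem calL_J_add_calL_K_Lambda3S3H_part
    (d : M.TorsionDecomposition ψ3 ψ3I ψ3J ψ3K ψK ψKI ψKJ ψKK) :
    calL M.J ((6 : ℝ) • ψ3 + (2 : ℝ) • calL M.I ψ3 - (8 : ℝ) • ψ3I)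
        + calL M.K ((6 : ℝ) • ψ3 + (2 : ℝ) • calL M.I ψ3 - (8 : ℝ) • ψ3I)
      = (-4 : ℝ) • ((6 : ℝ) • ψ3 + (2 : ℝ) • calL M.I ψ3 - (8 : ℝ) • ψ3I) := by
  have h_psi3I := d.psi3I.calL_J_add_calL_K
  rw [d.calL_psi3I] at h_psi3I
  simp only [(isLinearMap_calL (C := C) _).map_sub _ ((8 : ℝ) • ψ3I),
    (isLinearMap_calL _).map_smul _ ψ3I]
  linear_combination (norm := module) d.psi3.calL_J_add_calL_K_betaMap - (8 : ℝ) • h_psi3I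

theorem calL_J_add_calL_K_KH_part
    (d : M.TorsionDecomposition ψ3 ψ3I ψ3J ψ3K ψK ψKI ψKJ ψKK) :
    calL M.J ((-16 : ℝ) • ψK - (2 : ℝ) • ψKI) + calL M.K ((-16 : ℝ) • ψK - (2 : ℝ) • ψKI)
      = (2 : ℝ) • ((-16 : ℝ) • ψK - (2 : ℝ) • ψKI) := by
  simp only [(isLinearMap_calL (C := C) _).map_sub, (isLinearMap_calL _).map_smul, d.psiK.calL_J,
    d.psiK.calL_K, d.psiKI.calL_J, d.psiKI.calL_K]
  module

variable [IsScalarTower ℝ C V]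

theorem betaISplitting (d : M.TorsionDecomposition ψ3 ψ3I ψ3J ψ3K ψK ψKI ψKJ ψKK) (hn : n ≠ 0) :
    M.BetaISplitting
      (((6 : ℝ) • ψ3 + (2 : ℝ) • calL M.I ψ3 - (8 : ℝ) • ψ3I) + ((-16 : ℝ) • ψK - (2 : ℝ) • ψKI))
      ((6 + 2 / (n : ℝ)) • (M.thetaXiI - M.thetaXi) + (8 / (n : ℝ)) • M.thetaXi
        - (act1 M.J M.lambdaJ + act1 M.K M.lambdaK))
      ((2 : ℝ) • act1 M.I M.lambdaI
        + ((4 + 4 / (n : ℝ)) • (M.thetaXiI - M.thetaXi) + (16 - 8 / (n : ℝ)) • M.thetaXi)) where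
  Lam_I := by
    have h_Lam := isLinearMap_Lam (M := M) M.I
    simp only [h_Lam.map_add, h_Lam.map_sub, h_Lam.map_smul, d.psi3.Lam_I, d.psi3.Lam_I_calL_I,
      d.psi3I.Lam_I, d.psiK.isPrimitive.Lam_I, d.psiKI.isPrimitive.Lam_I, smul_zero, add_zero,
      sub_zero]
  Lam_J := by
    have h_Lam := isLinearMap_Lam (M := M) M.J
    simp only [h_Lam.map_add, h_Lam.map_sub, h_Lam.map_smul, d.psi3.Lam_J, d.psi3.Lam_J_calL_I,
      d.psi3I.Lam_J, d.psiK.isPrimitive.Lam_J, d.psiKI.isPrimitive.Lam_J, smul_zero, add_zero,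
      sub_zero]
  isLinearMap_q :=
    (((6 + 2 / (n : ℝ)) • (M.isLinearMap_thetaXiI.mk' _ - M.isLinearMap_thetaXi.mk' _)
      + (8 / (n : ℝ)) • M.isLinearMap_thetaXi.mk' _)
      - ((isLinearMap_act1 M.J_isLinearMap M.isLinearMap_lambdaJ).mk' _
        + (isLinearMap_act1 M.K_isLinearMap M.isLinearMap_lambdaK).mk' _)).isLinear
  isLinearMap_ν :=
    ((2 : ℝ) • (isLinearMap_act1 M.I_isLinearMap M.isLinearMap_lambdaI).mk' _
      + ((4 + 4 / (n : ℝ)) • (M.isLinearMap_thetaXiI.mk' _ - M.isLinearMap_thetaXi.mk' _)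
        + (16 - 8 / (n : ℝ)) • M.isLinearMap_thetaXi.mk' _)).isLinear
  betaI_eq := by
    rw [M.betaI_eq_omegaWedge, d.betaMap_xiTensor hn]
    simp only [(isLinearMap_omegaWedge (M := M) _).map_add,
      (isLinearMap_omegaWedge (M := M) _).map_sub, (isLinearMap_omegaWedge (M := M) _).map_smul]
    module

theorem nu3I_sub (d : M.TorsionDecomposition ψ3 ψ3I ψ3J ψ3K ψK ψKI ψKJ ψKK) (hn : 1 < n) :
    M.nu3I - (2 : ℝ) • act1 M.I M.lambdaI
      = (4 + 4 / (n : ℝ)) • M.thetaXiI + (12 - 12 / (n : ℝ)) • M.thetaXi := by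
  rw [(d.betaISplitting (by lia)).nu3I_eq hn]
  module

theorem nu3J_sub (d : M.TorsionDecomposition ψ3 ψ3I ψ3J ψ3K ψK ψKI ψKJ ψKK) (hn : 1 < n) :
    M.nu3J - (2 : ℝ) • act1 M.J M.lambdaJ
      = (4 + 4 / (n : ℝ)) • M.thetaXiJ + (12 - 12 / (n : ℝ)) • M.thetaXi := by
  have h := d.rot.nu3I_sub hn
  rwa [rot_thetaXi, rot_thetaXiI] at h

theorem nu3K_sub (d : M.TorsionDecomposition ψ3 ψ3I ψ3J ψ3K ψK ψKI ψKJ ψKK) (hn : 1 < n) :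
    M.nu3K - (2 : ℝ) • act1 M.K M.lambdaK
      = (4 + 4 / (n : ℝ)) • M.thetaXiK + (12 - 12 / (n : ℝ)) • M.thetaXi := by
  have h := d.rot.nu3J_sub hn
  rwa [rot_thetaXi, rot_thetaXiJ] at h

theorem beta3I_eq (d : M.TorsionDecomposition ψ3 ψ3I ψ3J ψ3K ψK ψKI ψKJ ψKK) (hn : 1 < n) :
    M.beta3I = (6 : ℝ) • ψ3 + (2 : ℝ) • calL M.I ψ3 - (8 : ℝ) • ψ3I :=
  beta3I_eq_of_beta3KI ((d.betaISplitting (by lia)).beta3KI_eq hn)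
    d.calL_J_add_calL_K_Lambda3S3H_part d.calL_J_add_calL_K_KH_part

theorem betaKI_eq (d : M.TorsionDecomposition ψ3 ψ3I ψ3J ψ3K ψK ψKI ψKJ ψKK) (hn : 1 < n) :
    M.betaKI = (-16 : ℝ) • ψK - (2 : ℝ) • ψKI :=
  betaKI_eq_of_beta3KI ((d.betaISplitting (by lia)).beta3KI_eq hn)
    d.calL_J_add_calL_K_Lambda3S3H_part d.calL_J_add_calL_K_KH_part

theorem beta3J_eq (d : M.TorsionDecomposition ψ3 ψ3I ψ3J ψ3K ψK ψKI ψKJ ψKK) (hn : 1 < n) :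
    M.beta3J = (6 : ℝ) • ψ3 + (2 : ℝ) • calL M.J ψ3 - (8 : ℝ) • ψ3J :=
  d.rot.beta3I_eq hn

theorem beta3K_eq (d : M.TorsionDecomposition ψ3 ψ3I ψ3J ψ3K ψK ψKI ψKJ ψKK) (hn : 1 < n) :
    M.beta3K = (6 : ℝ) • ψ3 + (2 : ℝ) • calL M.K ψ3 - (8 : ℝ) • ψ3K :=
  d.rot.beta3J_eq hn

theorem betaKJ_eq (d : M.TorsionDecomposition ψ3 ψ3I ψ3J ψ3K ψK ψKI ψKJ ψKK) (hn : 1 < n) :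
    M.betaKJ = (-16 : ℝ) • ψK - (2 : ℝ) • ψKJ :=
  d.rot.betaKI_eq hn

theorem betaKK_eq (d : M.TorsionDecomposition ψ3 ψ3I ψ3J ψ3K ψK ψKI ψKJ ψKK) (hn : 1 < n) :
    M.betaKK = (-16 : ℝ) • ψK - (2 : ℝ) • ψKK :=
  d.rot.betaKJ_eq hn

end TorsionDecomposition

theorem eq_smul_sub_smul_sum {n : ℕ} {E : Type*} [AddCommGroup E] [Module ℝ E] {θA θ σA σ : E}
    (hn : 1 < n) (hσA : σA = (4 + 4 / (n : ℝ)) • θA + (12 - 12 / (n : ℝ)) • θ)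
    (hθ : θ = ((n : ℝ) / (24 * (2 * n - 1))) • σ) :
    θA = ((n : ℝ) / (4 * (n + 1))) • (σA - (((n : ℝ) - 1) / (2 * (2 * n - 1))) • σ) := by
  have h_n : (1 : ℝ) < n := by exact_mod_cast hn
  have h_n0 : (n : ℝ) ≠ 0 := by linarith
  have h_θA : (n : ℝ) / (4 * (n + 1)) * (4 + 4 / n) = 1 := by field_simp
  have h_σ : (12 - 12 / (n : ℝ)) * (n / (24 * (2 * n - 1))) = (n - 1) / (2 * (2 * n - 1)) := by
    field_simp
    ring
  rw [hσA, hθ, smul_smul, h_σ, add_sub_cancel_right, smul_smul, h_θA, one_smul]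

namespace TorsionDecomposition

variable {n : ℕ} {C V : Type*} [CommRing C] [Algebra ℝ C] [AddCommGroup V] [Module C V]
  [Module ℝ V] [IsScalarTower ℝ C V]
variable {M : AQH n C V} {ψ3 ψ3I ψ3J ψ3K ψK ψKI ψKJ ψKK : V → V → V → C}

theorem sum_beta3 (d : M.TorsionDecomposition ψ3 ψ3I ψ3J ψ3K ψK ψKI ψKJ ψKK) (hn : 1 < n) :
    M.beta3I + M.beta3J + M.beta3K = (12 : ℝ) • ψ3 := by
  rw [d.beta3I_eq hn, d.beta3J_eq hn, d.beta3K_eq hn]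
  linear_combination (norm := module) (2 : ℝ) • d.psi3.casimir - (8 : ℝ) • d.sum_psi3

theorem sum_betaK (d : M.TorsionDecomposition ψ3 ψ3I ψ3J ψ3K ψK ψKI ψKJ ψKK) (hn : 1 < n) :
    M.betaKI + M.betaKJ + M.betaKK = (-48 : ℝ) • ψK := by
  rw [d.betaKI_eq hn, d.betaKJ_eq hn, d.betaKK_eq hn]
  linear_combination (norm := module) (-2 : ℝ) • d.sum_psiK

theorem sum_nu3_sub (d : M.TorsionDecomposition ψ3 ψ3I ψ3J ψ3K ψK ψKI ψKJ ψKK) (hn : 1 < n) :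
    (M.nu3I - (2 : ℝ) • act1 M.I M.lambdaI) + (M.nu3J - (2 : ℝ) • act1 M.J M.lambdaJ)
      + (M.nu3K - (2 : ℝ) • act1 M.K M.lambdaK) = (48 - 24 / (n : ℝ)) • M.thetaXi := by
  rw [d.nu3I_sub hn, d.nu3J_sub hn, d.nu3K_sub hn]
  linear_combination (norm := module)
    (4 + 4 / (n : ℝ)) • M.thetaXiI_add_thetaXiJ_add_thetaXiK

theorem psi3_eq (d : M.TorsionDecomposition ψ3 ψ3I ψ3J ψ3K ψK ψKI ψKJ ψKK) (hn : 1 < n) :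
    ψ3 = M.psi3 := by
  change ψ3 = (1 / 12 : ℝ) • (M.beta3I + M.beta3J + M.beta3K)
  rw [d.sum_beta3 hn]
  module

theorem psi3I_eq (d : M.TorsionDecomposition ψ3 ψ3I ψ3J ψ3K ψK ψKI ψKJ ψKK) (hn : 1 < n) :
    ψ3I = M.psi3I := by
  change ψ3I = (-(1 / 8 : ℝ)) • M.beta3I + (1 / 48 : ℝ) •
    ((3 : ℝ) • (M.beta3I + M.beta3J + M.beta3K) + calL M.I (M.beta3I + M.beta3J + M.beta3K))
  rw [d.sum_beta3 hn, d.beta3I_eq hn, (isLinearMap_calL _).map_smul]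
  module

theorem psi3J_eq (d : M.TorsionDecomposition ψ3 ψ3I ψ3J ψ3K ψK ψKI ψKJ ψKK) (hn : 1 < n) :
    ψ3J = M.psi3J := by
  change ψ3J = (-(1 / 8 : ℝ)) • M.beta3J + (1 / 48 : ℝ) •
    ((3 : ℝ) • (M.beta3I + M.beta3J + M.beta3K) + calL M.J (M.beta3I + M.beta3J + M.beta3K))
  rw [d.sum_beta3 hn, d.beta3J_eq hn, (isLinearMap_calL _).map_smul]
  module

theorem psi3K_eq (d : M.TorsionDecomposition ψ3 ψ3I ψ3J ψ3K ψK ψKI ψKJ ψKK) (hn : 1 < n) :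
    ψ3K = M.psi3K := by
  change ψ3K = (-(1 / 8 : ℝ)) • M.beta3K + (1 / 48 : ℝ) •
    ((3 : ℝ) • (M.beta3I + M.beta3J + M.beta3K) + calL M.K (M.beta3I + M.beta3J + M.beta3K))
  rw [d.sum_beta3 hn, d.beta3K_eq hn, (isLinearMap_calL _).map_smul]
  module

theorem psiK_eq (d : M.TorsionDecomposition ψ3 ψ3I ψ3J ψ3K ψK ψKI ψKJ ψKK) (hn : 1 < n) :
    ψK = M.psiK := by
  change ψK = (-(1 / 48 : ℝ)) • (M.betaKI + M.betaKJ + M.betaKK)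
  rw [d.sum_betaK hn]
  module

theorem psiKI_eq (d : M.TorsionDecomposition ψ3 ψ3I ψ3J ψ3K ψK ψKI ψKJ ψKK) (hn : 1 < n) :
    ψKI = M.psiKI := by
  change ψKI = (-(1 / 2 : ℝ)) • M.betaKI + (1 / 6 : ℝ) • (M.betaKI + M.betaKJ + M.betaKK)
  rw [d.sum_betaK hn, d.betaKI_eq hn]
  module

theorem psiKJ_eq (d : M.TorsionDecomposition ψ3 ψ3I ψ3J ψ3K ψK ψKI ψKJ ψKK) (hn : 1 < n) :
    ψKJ = M.psiKJ := by
  change ψKJ = (-(1 / 2 : ℝ)) • M.betaKJ + (1 / 6 : ℝ) • (M.betaKI + M.betaKJ + M.betaKK)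
  rw [d.sum_betaK hn, d.betaKJ_eq hn]
  module

theorem psiKK_eq (d : M.TorsionDecomposition ψ3 ψ3I ψ3J ψ3K ψK ψKI ψKJ ψKK) (hn : 1 < n) :
    ψKK = M.psiKK := by
  change ψKK = (-(1 / 2 : ℝ)) • M.betaKK + (1 / 6 : ℝ) • (M.betaKI + M.betaKJ + M.betaKK)
  rw [d.sum_betaK hn, d.betaKK_eq hn]
  module

theorem thetaXi_eq (d : M.TorsionDecomposition ψ3 ψ3I ψ3J ψ3K ψK ψKI ψKJ ψKK) (hn : 1 < n) :
    M.thetaXi = ((n : ℝ) / (24 * (2 * n - 1))) •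
      ((M.nu3I - (2 : ℝ) • act1 M.I M.lambdaI) + (M.nu3J - (2 : ℝ) • act1 M.J M.lambdaJ)
        + (M.nu3K - (2 : ℝ) • act1 M.K M.lambdaK)) := by
  have h_n : (1 : ℝ) < n := by exact_mod_cast hn
  have h_n0 : (n : ℝ) ≠ 0 := by linarith
  have h_2n : 2 * (n : ℝ) - 1 ≠ 0 := by linarith
  have h_coeff : (n : ℝ) / (24 * (2 * n - 1)) * (48 - 24 / n) = 1 := by
    rw [div_mul_eq_mul_div, div_eq_one_iff_eq (mul_ne_zero (by norm_num) h_2n)]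
    field_simp
    ring
  rw [d.sum_nu3_sub hn, smul_smul, h_coeff, one_smul]

theorem thetaXiI_eq (d : M.TorsionDecomposition ψ3 ψ3I ψ3J ψ3K ψK ψKI ψKJ ψKK) (hn : 1 < n) :
    M.thetaXiI = ((n : ℝ) / (4 * (n + 1))) • ((M.nu3I - (2 : ℝ) • act1 M.I M.lambdaI)
      - (((n : ℝ) - 1) / (2 * (2 * n - 1))) •
        ((M.nu3I - (2 : ℝ) • act1 M.I M.lambdaI) + (M.nu3J - (2 : ℝ) • act1 M.J M.lambdaJ)
          + (M.nu3K - (2 : ℝ) • act1 M.K M.lambdaK))) :=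
  eq_smul_sub_smul_sum hn (d.nu3I_sub hn) (d.thetaXi_eq hn)

theorem thetaXiJ_eq (d : M.TorsionDecomposition ψ3 ψ3I ψ3J ψ3K ψK ψKI ψKJ ψKK) (hn : 1 < n) :
    M.thetaXiJ = ((n : ℝ) / (4 * (n + 1))) • ((M.nu3J - (2 : ℝ) • act1 M.J M.lambdaJ)
      - (((n : ℝ) - 1) / (2 * (2 * n - 1))) •
        ((M.nu3I - (2 : ℝ) • act1 M.I M.lambdaI) + (M.nu3J - (2 : ℝ) • act1 M.J M.lambdaJ)
          + (M.nu3K - (2 : ℝ) • act1 M.K M.lambdaK))) :=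
  eq_smul_sub_smul_sum hn (d.nu3J_sub hn) (d.thetaXi_eq hn)

theorem thetaXiK_eq (d : M.TorsionDecomposition ψ3 ψ3I ψ3J ψ3K ψK ψKI ψKJ ψKK) (hn : 1 < n) :
    M.thetaXiK = ((n : ℝ) / (4 * (n + 1))) • ((M.nu3K - (2 : ℝ) • act1 M.K M.lambdaK)
      - (((n : ℝ) - 1) / (2 * (2 * n - 1))) •
        ((M.nu3I - (2 : ℝ) • act1 M.I M.lambdaI) + (M.nu3J - (2 : ℝ) • act1 M.J M.lambdaJ)
          + (M.nu3K - (2 : ℝ) • act1 M.K M.lambdaK))) :=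
  eq_smul_sub_smul_sum hn (d.nu3K_sub hn) (d.thetaXi_eq hn)

end TorsionDecomposition

end AQH

open AQH in
/-- For an almost quaternion-Hermitian `4n`-manifold, `n > 1`,
the six `Sp(n)Sp(1)`-components of the intrinsic torsion `ξ` are computed from the
three-forms `β_A` via the formulas of Proposition 5.  The components are given
as hypotheses in the parametrized form described in §3 of the paper. -/
theorem statement7 {n : ℕ} {C V : Type*} [CommRing C] [Algebra ℝ C] [AddCommGroup V]
    [Module C V] [Module ℝ V] [IsScalarTower ℝ C V]
    (hn : 1 < n) (M : AQH n C V)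
    (xi33 xiK3 xiE3 xi3H xiKH xiEH : V → V → V)
    (ψ3 ψ3I ψ3J ψ3K ψK ψKI ψKJ ψKK : V → V → V → C)
    -- decomposition of the intrinsic torsion into the six components
    (hdec : ∀ X Y, M.xi X Y
      = xi33 X Y + xiK3 X Y + xiE3 X Y + xi3H X Y + xiKH X Y + xiEH X Y)
    -- `ξ_{33}` is given by a three-form `ψ^{(3)} ∈ Λ³₀E S³H`
    (hψ3 : IsAlt3 ψ3 ∧ Lin3 ψ3
      ∧ (∀ X Y Z, calL M.I ψ3 X Y Z + calL M.J ψ3 X Y Z + calL M.K ψ3 X Y Z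
          = -((3:ℝ) • ψ3 X Y Z))
      ∧ M.Lam M.I ψ3 = 0 ∧ M.Lam M.J ψ3 = 0 ∧ M.Lam M.K ψ3 = 0)
    (h33 : ∀ X Y Z, M.g Y (xi33 X Z) = ψ3 X Y Z)
    -- `ξ_{3H}` is given by local three-forms `ψ^{(3)}_A ∈ Λ³₀E S³H` of type `{2,1}_A`
    -- summing to zero
    (hψ3I : IsAlt3 ψ3I ∧ Lin3 ψ3I
      ∧ (∀ X Y Z, calL M.I ψ3I X Y Z + calL M.J ψ3I X Y Z + calL M.K ψ3I X Y Z
          = -((3:ℝ) • ψ3I X Y Z))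
      ∧ M.Lam M.I ψ3I = 0 ∧ M.Lam M.J ψ3I = 0 ∧ M.Lam M.K ψ3I = 0
      ∧ calL M.I ψ3I = ψ3I)
    (hψ3J : IsAlt3 ψ3J ∧ Lin3 ψ3J
      ∧ (∀ X Y Z, calL M.I ψ3J X Y Z + calL M.J ψ3J X Y Z + calL M.K ψ3J X Y Z
          = -((3:ℝ) • ψ3J X Y Z))
      ∧ M.Lam M.I ψ3J = 0 ∧ M.Lam M.J ψ3J = 0 ∧ M.Lam M.K ψ3J = 0
      ∧ calL M.J ψ3J = ψ3J)
    (hψ3K : IsAlt3 ψ3K ∧ Lin3 ψ3K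
      ∧ (∀ X Y Z, calL M.I ψ3K X Y Z + calL M.J ψ3K X Y Z + calL M.K ψ3K X Y Z
          = -((3:ℝ) • ψ3K X Y Z))
      ∧ M.Lam M.I ψ3K = 0 ∧ M.Lam M.J ψ3K = 0 ∧ M.Lam M.K ψ3K = 0
      ∧ calL M.K ψ3K = ψ3K)
    (hψ3sum : ∀ X Y Z, ψ3I X Y Z + ψ3J X Y Z + ψ3K X Y Z = 0)
    (h3H : ∀ X Y Z, M.g Y (xi3H X Z)
      = op23 M.I ψ3I X Y Z + op23 M.J ψ3J X Y Z + op23 M.K ψ3K X Y Z)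
    -- `ξ_{KH}` is given by a three-form `ψ^{(K)} ∈ KH`
    (hψK : M.InKH3 ψK)
    (hKH : ∀ X Y Z, M.g Y (xiKH X Z) = M.xiKH3 ψK X Y Z)
    -- `ξ_{K3}` is given by local three-forms `ψ^{(K)}_A ∈ KH` summing to zero
    (hψKI : M.InKH3 ψKI) (hψKJ : M.InKH3 ψKJ) (hψKK : M.InKH3 ψKK)
    (hψKsum : ∀ X Y Z, ψKI X Y Z + ψKJ X Y Z + ψKK X Y Z = 0)
    (hK3 : ∀ X Y Z, M.g Y (xiK3 X Z)
      = op23 M.I ψKI X Y Z + op23 M.J ψKJ X Y Z + op23 M.K ψKK X Y Z)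
    -- `ξ_{E3}` is given by the local one-forms `θ^ξ_A` via
    -- `(1/n) Σ_A ( n A(θ^ξ_A - θ^ξ) ∧ ω_A - (n-1) A(θ^ξ_A - θ^ξ) ⊗ ω_A )`
    (hE3 : ∀ X Y Z, M.g Y (xiE3 X Z) = (1/(n:ℝ)) •
      (((n:ℝ) • wedge12 (act1 M.I (fun W => M.thetaXiI W - M.thetaXi W)) (M.omega M.I) X Y Z
          - ((n:ℝ)-1) • (act1 M.I (fun W => M.thetaXiI W - M.thetaXi W) X * M.omega M.I Y Z))
        + ((n:ℝ) • wedge12 (act1 M.J (fun W => M.thetaXiJ W - M.thetaXi W)) (M.omega M.J) X Y Z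
          - ((n:ℝ)-1) • (act1 M.J (fun W => M.thetaXiJ W - M.thetaXi W) X * M.omega M.J Y Z))
        + ((n:ℝ) • wedge12 (act1 M.K (fun W => M.thetaXiK W - M.thetaXi W)) (M.omega M.K) X Y Z
          - ((n:ℝ)-1) • (act1 M.K (fun W => M.thetaXiK W - M.thetaXi W) X * M.omega M.K Y Z))))
    -- `ξ_{EH}` is given by the global one-form `θ^ξ`
    (hEH : ∀ X Y Z, M.g Y (xiEH X Z) = M.xiEH3 M.thetaXi X Y Z) :
    -- (i) `ψ^{(3)} = (1/12)(β_I^{(3)} + β_J^{(3)} + β_K^{(3)})`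
    (∀ X Y Z, ψ3 X Y Z = (1/12:ℝ) • (M.beta3I X Y Z + M.beta3J X Y Z + M.beta3K X Y Z)) ∧
    -- (ii) `ψ^{(3)}_A = -(1/8) β_A^{(3)} + (1/48)(3 + 𝓛_A) Σ_B β_B^{(3)}`
    (∀ X Y Z, ψ3I X Y Z = M.psi3I X Y Z) ∧
    (∀ X Y Z, ψ3J X Y Z = M.psi3J X Y Z) ∧
    (∀ X Y Z, ψ3K X Y Z = M.psi3K X Y Z) ∧
    -- (iii) `ψ^{(K)} = -(1/48)(β_I^{(K)} + β_J^{(K)} + β_K^{(K)})`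
    (∀ X Y Z, ψK X Y Z = (-(1/48:ℝ)) • (M.betaKI X Y Z + M.betaKJ X Y Z + M.betaKK X Y Z)) ∧
    -- (iv) `ψ^{(K)}_A = -(1/2) β_A^{(K)} + (1/6) Σ_B β_B^{(K)}`
    (∀ X Y Z, ψKI X Y Z = M.psiKI X Y Z) ∧
    (∀ X Y Z, ψKJ X Y Z = M.psiKJ X Y Z) ∧
    (∀ X Y Z, ψKK X Y Z = M.psiKK X Y Z) ∧
    -- (v) `θ^ξ = (n/(24(2n-1))) Σ_A (ν^A_3 - 2 A λ_A)`
    (∀ X, M.thetaXi X = ((n:ℝ)/(24*(2*(n:ℝ)-1))) •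
      ((M.nu3I X - (2:ℝ) • act1 M.I M.lambdaI X)
        + (M.nu3J X - (2:ℝ) • act1 M.J M.lambdaJ X)
        + (M.nu3K X - (2:ℝ) • act1 M.K M.lambdaK X))) ∧
    -- (vi) `θ^ξ_A = (n/(4(n+1))) ((ν^A_3 - 2Aλ_A) - ((n-1)/(2(2n-1))) Σ_B (ν^B_3 - 2Bλ_B))`
    (∀ X, M.thetaXiI X = ((n:ℝ)/(4*((n:ℝ)+1))) •
      ((M.nu3I X - (2:ℝ) • act1 M.I M.lambdaI X)
        - (((n:ℝ)-1)/(2*(2*(n:ℝ)-1))) •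
          ((M.nu3I X - (2:ℝ) • act1 M.I M.lambdaI X)
            + (M.nu3J X - (2:ℝ) • act1 M.J M.lambdaJ X)
            + (M.nu3K X - (2:ℝ) • act1 M.K M.lambdaK X)))) ∧
    (∀ X, M.thetaXiJ X = ((n:ℝ)/(4*((n:ℝ)+1))) •
      ((M.nu3J X - (2:ℝ) • act1 M.J M.lambdaJ X)
        - (((n:ℝ)-1)/(2*(2*(n:ℝ)-1))) •
          ((M.nu3I X - (2:ℝ) • act1 M.I M.lambdaI X)
            + (M.nu3J X - (2:ℝ) • act1 M.J M.lambdaJ X)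
            + (M.nu3K X - (2:ℝ) • act1 M.K M.lambdaK X)))) ∧
    (∀ X, M.thetaXiK X = ((n:ℝ)/(4*((n:ℝ)+1))) •
      ((M.nu3K X - (2:ℝ) • act1 M.K M.lambdaK X)
        - (((n:ℝ)-1)/(2*(2*(n:ℝ)-1))) •
          ((M.nu3I X - (2:ℝ) • act1 M.I M.lambdaI X)
            + (M.nu3J X - (2:ℝ) • act1 M.J M.lambdaJ X)
            + (M.nu3K X - (2:ℝ) • act1 M.K M.lambdaK X)))) := by
  obtain ⟨h3_alt, h3_lin, h3_casimir, h3_I, h3_J, h3_K⟩ := hψ3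
  obtain ⟨hI_alt, hI_lin, hI_casimir, hI_I, hI_J, hI_K, hI_type⟩ := hψ3I
  obtain ⟨hJ_alt, hJ_lin, hJ_casimir, hJ_I, hJ_J, hJ_K, hJ_type⟩ := hψ3J
  obtain ⟨hK_alt, hK_lin, hK_casimir, hK_I, hK_J, hK_K, hK_type⟩ := hψ3K
  have h_xi : M.xiTensor = ψ3 + M.sumOp23 ψKI ψKJ ψKK
      + M.xiE33 (M.thetaXiI - M.thetaXi) (M.thetaXiJ - M.thetaXi) (M.thetaXiK - M.thetaXi)
      + M.sumOp23 ψ3I ψ3J ψ3K + M.xiKH3 ψK + M.xiEH3 M.thetaXi := by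
    funext X Y Z
    simp only [xiTensor, hdec, M.g_add_right, h33, hK3, hE3, h3H, hKH, hEH]
    rfl
  have d : M.TorsionDecomposition ψ3 ψ3I ψ3J ψ3K ψK ψKI ψKJ ψKK :=
    ⟨.of_forall h3_alt h3_lin h3_casimir h3_I h3_J h3_K,
      .of_forall hI_alt hI_lin hI_casimir hI_I hI_J hI_K,
      .of_forall hJ_alt hJ_lin hJ_casimir hJ_I hJ_J hJ_K,
      .of_forall hK_alt hK_lin hK_casimir hK_I hK_J hK_K, hI_type, hJ_type, hK_type,
      funext₃ hψ3sum, hψK, hψKI, hψKJ, hψKK, funext₃ hψKsum, h_xi⟩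
  exact ⟨congrFun₃ (d.psi3_eq hn), congrFun₃ (d.psi3I_eq hn), congrFun₃ (d.psi3J_eq hn),
    congrFun₃ (d.psi3K_eq hn), congrFun₃ (d.psiK_eq hn), congrFun₃ (d.psiKI_eq hn),
    congrFun₃ (d.psiKJ_eq hn), congrFun₃ (d.psiKK_eq hn), congrFun (d.thetaXi_eq hn),
    congrFun (d.thetaXiI_eq hn), congrFun (d.thetaXiJ_eq hn), congrFun (d.thetaXiK_eq hn)⟩
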